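/- Let d ≥ 3 be a fixed integer and set α = min{1/8, (d−2)/(5d−6)}. For every ε > 0 there exist constants c > 0 and N such that for all n ≥ N with nd even and all primes p with gcd(p,d) = 1 and p ≤ c·n^α, one has | (2^{nd/2}(nd/2)!/(nd)!) · Σ_{v ∈ F_p^n, v ≠ 0} #{fixed-point-free involutions σ of [n]×[d] : A(σ)·v = 0 over F_p} − (1 + 1_{p=2}) | ≤ ε, where A(σ) is reduced modulo p and 1_{p=2} equals 1 if p = 2 and 0 otherwise. -/

import Mathlib

open Finset

/-- Adjacency matrix of the configuration model: `A(σ) k ℓ` is the number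
of `i ∈ [d]` with `σ (k, i) ∈ {ℓ} × [d]`. -/
def adjMat (n d : ℕ) (σ : Equiv.Perm (Fin n × Fin d)) : Matrix (Fin n) (Fin n) ℤ :=
  fun k l => ((Finset.univ.filter (fun i : Fin d => (σ (k, i)).1 = l)).card : ℤ)

namespace UCNV
set_option linter.unusedSectionVars false

/-- fixed-point-free involutions -/
def Mt (H : Type*) [Fintype H] [DecidableEq H] : Finset (Equiv.Perm H) :=
  Finset.univ.filter (fun σ => (∀ x, σ (σ x) = x) ∧ (∀ x, σ x ≠ x))

/-- the flip on `Fin m × Bool` -/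
def flip (m : ℕ) : Equiv.Perm (Fin m × Bool) :=
  Equiv.prodCongr (Equiv.refl _) Equiv.boolNot

/-- the matching given by a bijection -/
def sig {H : Type*} {m : ℕ} (e : Fin m × Bool ≃ H) : Equiv.Perm H :=
  (e.symm.trans (flip m)).trans e

section
variable {H : Type*} [Fintype H] [DecidableEq H] {m : ℕ}

lemma mem_Mt (σ : Equiv.Perm H) :
    σ ∈ Mt H ↔ (∀ x, σ (σ x) = x) ∧ (∀ x, σ x ≠ x) := by
  simp [Mt]

lemma mem_Mt_iff_cycleType (hH : Fintype.card H = 2 * m) (σ : Equiv.Perm H) :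
    σ ∈ Mt H ↔ σ.cycleType = Multiset.replicate m 2 := by
  rw [mem_Mt]
  constructor
  · rintro ⟨h1, h2⟩
    have hp : σ ^ 2 = 1 := by
      ext x; simp [pow_two, h1]
    have hs : σ.support = Finset.univ := by
      ext x; simp [h2]
    have hc := Equiv.Perm.cycleType_of_pow_prime_eq_one (p := 2) hp
    have hsum := σ.sum_cycleType
    rw [hs, hc] at hsum
    simp [hH] at hsum
    rw [hc, show σ.cycleType.card = m by omega]
  · intro h
    have hsum := σ.sum_cycleType
    rw [h] at hsum
    have hs : σ.support = Finset.univ := by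
      rw [← Finset.card_eq_iff_eq_univ, ← hsum, hH]; simp; ring
    have hp : σ ^ 2 = 1 := by
      rw [Equiv.Perm.pow_prime_eq_one_iff, h]
      intro c hc
      exact Multiset.eq_of_mem_replicate hc
    refine ⟨fun x => ?_, fun x => ?_⟩
    · have := congrArg (fun τ : Equiv.Perm H => τ x) hp
      simpa [pow_two] using this
    · have : x ∈ σ.support := by rw [hs]; simp
      simpa using this

lemma card_Mt (hH : Fintype.card H = 2 * m) :
    (Mt H).card * (2 ^ m * m.factorial) = (2 * m).factorial := by
  have h := Equiv.Perm.card_of_cycleType_mul_eq H (Multiset.replicate m 2)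
  have he : (Finset.univ.filter (fun g : Equiv.Perm H => g.cycleType = Multiset.replicate m 2))
      = Mt H := by
    ext σ; rw [mem_Mt_iff_cycleType hH]; simp
  rw [he, hH, if_pos ⟨by simp; omega, fun a ha => (Multiset.eq_of_mem_replicate ha).ge⟩] at h
  rw [← h]
  congr 1
  rcases Nat.eq_zero_or_pos m with rfl | hm
  · simp
  · rw [Multiset.toFinset_replicate, if_neg (by omega)]
    simp [mul_comm]

lemma sig_apply (e : Fin m × Bool ≃ H) (j : Fin m) (b : Bool) : sig e (e (j, b)) = e (j, !b) := by
  simp [sig, flip]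

lemma sig_mem (e : Fin m × Bool ≃ H) : sig e ∈ Mt H := by
  rw [mem_Mt]
  refine ⟨fun x => ?_, fun x => ?_⟩
  · obtain ⟨⟨j, b⟩, rfl⟩ := e.surjective x
    rw [sig_apply, sig_apply, Bool.not_not]
  · intro h
    have := congrArg e.symm h
    simp [sig, flip] at this
    have := congrArg Prod.snd this
    simp at this

lemma sig_trans (e : Fin m × Bool ≃ H) (g : Equiv.Perm H) :
    sig (e.trans g) = g * sig e * g⁻¹ := by
  ext x; simp [sig]

lemma exists_equiv (hH : Fintype.card H = 2 * m) : Nonempty (Fin m × Bool ≃ H) := by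
  rw [← Fintype.card_eq]; simp [hH, mul_comm]

lemma conj_of_mem (hH : Fintype.card H = 2 * m) {σ τ : Equiv.Perm H} (h1 : σ ∈ Mt H)
    (h2 : τ ∈ Mt H) : ∃ g : Equiv.Perm H, g * σ * g⁻¹ = τ := by
  rw [mem_Mt_iff_cycleType hH] at h1 h2
  exact isConj_iff.1 (Equiv.Perm.isConj_iff_cycleType_eq.2 (h1.trans h2.symm))

lemma exists_sig (hH : Fintype.card H = 2 * m) {σ : Equiv.Perm H} (h1 : σ ∈ Mt H) :
    ∃ e : Fin m × Bool ≃ H, sig e = σ := by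
  obtain ⟨e⟩ := exists_equiv hH
  obtain ⟨g, hg⟩ := conj_of_mem hH (sig_mem e) h1
  exact ⟨e.trans g, by rw [sig_trans, hg]⟩

lemma card_fiber_eq (hH : Fintype.card H = 2 * m) {σ τ : Equiv.Perm H} (h1 : σ ∈ Mt H)
    (h2 : τ ∈ Mt H) :
    (univ.filter (fun e : Fin m × Bool ≃ H => sig e = σ)).card =
    (univ.filter (fun e : Fin m × Bool ≃ H => sig e = τ)).card := by
  obtain ⟨g, hg⟩ := conj_of_mem hH h1 h2
  refine Finset.card_bij' (fun e _ => e.trans g) (fun e _ => e.trans g⁻¹) ?_ ?_ ?_ ?_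
  · intro e he; simp only [mem_filter, mem_univ, true_and] at he ⊢; rw [sig_trans, he, hg]
  · intro e he; simp only [mem_filter, mem_univ, true_and] at he ⊢
    rw [sig_trans, he, ← hg]; group
  · intro e _; ext x; simp
  · intro e _; ext x; simp

lemma card_fiber (hH : Fintype.card H = 2 * m) {σ : Equiv.Perm H} (h1 : σ ∈ Mt H) :
    (univ.filter (fun e : Fin m × Bool ≃ H => sig e = σ)).card = 2 ^ m * m.factorial := by
  have h : (univ : Finset (Fin m × Bool ≃ H)).card =
      ∑ τ ∈ Mt H, (univ.filter (fun e : Fin m × Bool ≃ H => sig e = τ)).card :=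
    Finset.card_eq_sum_card_fiberwise (fun e _ => sig_mem e)
  rw [Finset.sum_congr rfl (fun τ hτ => card_fiber_eq hH hτ h1)] at h
  obtain ⟨e⟩ := exists_equiv hH
  rw [Finset.card_univ, Fintype.card_equiv e, Finset.sum_const, smul_eq_mul] at h
  have hc : Fintype.card (Fin m × Bool) = 2 * m := by simp [mul_comm]
  rw [hc, ← card_Mt hH] at h
  have hpos : 0 < (Mt H).card := Finset.card_pos.2 ⟨σ, h1⟩
  exact (Nat.eq_of_mul_eq_mul_left hpos h).symm

lemma sum_sig (hH : Fintype.card H = 2 * m) (f : Equiv.Perm H → ℂ) :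
    ∑ e : Fin m × Bool ≃ H, f (sig e) = (2 ^ m * m.factorial : ℕ) * ∑ σ ∈ Mt H, f σ := by
  rw [← Finset.sum_fiberwise_of_maps_to (s := univ) (t := Mt H) (g := fun e => sig e)
    (fun e _ => sig_mem e), Finset.mul_sum]
  refine Finset.sum_congr rfl fun σ hσ => ?_
  rw [← card_fiber hH hσ, ← nsmul_eq_mul, ← Finset.sum_const]
  refine Finset.sum_congr rfl fun e he => ?_
  simp only [mem_filter, mem_univ, true_and] at he
  rw [he]

lemma Mt_card_pos (hH : Fintype.card H = 2 * m) : 0 < (Mt H).card := by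
  obtain ⟨e⟩ := exists_equiv hH
  exact Finset.card_pos.2 ⟨_, sig_mem e⟩

/-- number of matchings preserving a set `V` -/
lemma card_pres_le (hH : Fintype.card H = 2 * m) (V : Finset H) (s : ℕ) (hV : V.card = 2 * s) :
    ((Mt H).filter (fun σ => V.map σ.toEmbedding = V)).card * m.choose s ≤ (Mt H).card := by
  -- independence of V
  have hind : ∀ V' ∈ Finset.powersetCard (2 * s) (univ : Finset H),
      ((Mt H).filter (fun σ => V'.map σ.toEmbedding = V')).card =
      ((Mt H).filter (fun σ => V.map σ.toEmbedding = V)).card := by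
    intro V' hV'
    rw [Finset.mem_powersetCard] at hV'
    have hcard : V'.card = V.card := by rw [hV'.2, hV]
    obtain ⟨g, hg⟩ : ∃ g : Equiv.Perm H, V'.map g.toEmbedding = V := by
      have e1 : {x // x ∈ V'} ≃ {x // x ∈ V} := Finset.equivOfCardEq hcard
      refine ⟨e1.extendSubtype, ?_⟩
      apply Finset.eq_of_subset_of_card_le
      · intro y hy
        simp only [mem_map, Equiv.coe_toEmbedding] at hy
        obtain ⟨x, hx, rfl⟩ := hy
        exact e1.extendSubtype_mem x hx
      · simp [hcard]
    have hg' : V.map (g⁻¹).toEmbedding = V' := by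
      rw [← hg, Finset.map_map]
      convert Finset.map_refl
      ext x; simp
    refine Finset.card_bij' (fun σ _ => g * σ * g⁻¹) (fun σ _ => g⁻¹ * σ * g) ?_ ?_ ?_ ?_
    · intro σ hσ
      simp only [mem_filter, mem_Mt] at hσ ⊢
      refine ⟨⟨fun x => by simp [hσ.1.1], fun x h => hσ.1.2 (g⁻¹ x) ?_⟩, ?_⟩
      · rw [Equiv.Perm.mul_apply, Equiv.Perm.mul_apply] at h
        exact (Equiv.Perm.eq_inv_iff_eq.2 h)
      · have : (g * σ * g⁻¹).toEmbedding = ((g⁻¹).toEmbedding.trans σ.toEmbedding).trans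
          g.toEmbedding := by ext x; simp
        rw [this, ← Finset.map_map, ← Finset.map_map, hg', hσ.2, hg]
    · intro σ hσ
      simp only [mem_filter, mem_Mt] at hσ ⊢
      refine ⟨⟨fun x => by simp [hσ.1.1], fun x h => hσ.1.2 (g x) ?_⟩, ?_⟩
      · rw [Equiv.Perm.mul_apply, Equiv.Perm.mul_apply] at h
        exact (Equiv.Perm.inv_eq_iff_eq.1 h)
      · have : (g⁻¹ * σ * g).toEmbedding = ((g).toEmbedding.trans σ.toEmbedding).trans
          (g⁻¹).toEmbedding := by ext x; simp
        rw [this, ← Finset.map_map, ← Finset.map_map, hg, hσ.2, hg']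
    · intro σ _; group
    · intro σ _; group
  -- invariants sets of a given matching
  have hinv : ∀ σ ∈ Mt H, ((Finset.powersetCard (2 * s) (univ : Finset H)).filter
      (fun V' => V'.map σ.toEmbedding = V')).card ≤ m.choose s := by
    intro σ hσ
    obtain ⟨e, rfl⟩ := exists_sig hH hσ
    have : m.choose s = (Finset.powersetCard s (univ : Finset (Fin m))).card := by simp
    rw [this]
    have key : ∀ V' : Finset H, V'.map (sig e).toEmbedding = V' →
        ∀ j b, e (j, b) ∈ V' ↔ e (j, true) ∈ V' := by
      intro V' h' j b
      cases b with
      | true => rfl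
      | false =>
        constructor
        · intro h
          rw [← h']
          simp only [mem_map, Equiv.coe_toEmbedding]
          exact ⟨_, h, by rw [sig_apply]; rfl⟩
        · intro h
          rw [← h']
          simp only [mem_map, Equiv.coe_toEmbedding]
          exact ⟨_, h, by rw [sig_apply]; rfl⟩
    refine Finset.card_le_card_of_injOn
      (fun V' => univ.filter (fun j => e (j, true) ∈ V')) ?_ ?_
    · intro V' hV'
      simp only [coe_filter, Finset.mem_powersetCard, Set.mem_ofPred_eq] at hV'
      simp only [Finset.mem_coe, Finset.mem_powersetCard]
      refine ⟨Finset.subset_univ _, ?_⟩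
      have hk := key V' hV'.2
      have h2 : V' = ((univ.filter (fun j => e (j, true) ∈ V')) ×ˢ (univ : Finset Bool)).map
          e.toEmbedding := by
        ext x
        obtain ⟨⟨j, b⟩, rfl⟩ := e.surjective x
        simp [hk j b]
      have h3 := congrArg Finset.card h2
      rw [hV'.1.2, Finset.card_map, Finset.card_product] at h3
      simp at h3
      omega
    · intro V1 h1 V2 h2 h
      simp only [coe_filter, Finset.mem_powersetCard, Set.mem_ofPred_eq] at h1 h2
      ext x
      obtain ⟨⟨j, b⟩, rfl⟩ := e.surjective x
      rw [key V1 h1.2, key V2 h2.2]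
      have := Finset.ext_iff.1 h j
      simpa using this
  -- double counting
  have hdc : ((Finset.powersetCard (2 * s) (univ : Finset H)).card) *
      ((Mt H).filter (fun σ => V.map σ.toEmbedding = V)).card ≤ (Mt H).card * m.choose s := by
    calc _ = ∑ V' ∈ Finset.powersetCard (2 * s) (univ : Finset H),
          ((Mt H).filter (fun σ => V'.map σ.toEmbedding = V')).card := by
          rw [Finset.sum_congr rfl hind]; simp
      _ = ∑ σ ∈ Mt H, ((Finset.powersetCard (2 * s) (univ : Finset H)).filter
            (fun V' => V'.map σ.toEmbedding = V')).card :=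
          Finset.sum_card_bipartiteAbove_eq_sum_card_bipartiteBelow _
      _ ≤ ∑ σ ∈ Mt H, m.choose s := Finset.sum_le_sum hinv
      _ = _ := by simp
  have hch : m.choose s * m.choose s ≤ (2 * m).choose (2 * s) := by
    rw [two_mul m, Nat.add_choose_eq]
    exact Finset.single_le_sum (f := fun ij : ℕ × ℕ => m.choose ij.1 * m.choose ij.2)
      (fun _ _ => Nat.zero_le _) (a := (s, s)) (by simp; ring)
  rw [Finset.card_powersetCard, Finset.card_univ, hH] at hdc
  have hs : s ≤ m := by
    have := Finset.card_le_univ V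
    omega
  have hpos := Nat.choose_pos hs
  have h4 : m.choose s * (((Mt H).filter (fun σ => V.map σ.toEmbedding = V)).card * m.choose s)
      ≤ m.choose s * (Mt H).card := by
    nlinarith [Nat.zero_le ((Mt H).filter (fun σ => V.map σ.toEmbedding = V)).card]
  exact Nat.le_of_mul_le_mul_left h4 hpos

end
end UCNV

namespace UCNV
set_option linter.unusedSectionVars false

lemma pow_le_choose_mul (s m : ℕ) (h : s ≤ m) : m ^ s ≤ s ^ s * m.choose s := by
  induction s generalizing m with
  | zero => simp
  | succ s ih =>
    obtain ⟨m, rfl⟩ : ∃ m', m = m' + 1 := ⟨m - 1, by omega⟩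
    have hsm : s ≤ m := by omega
    have h1 := Nat.add_one_mul_choose_eq m s
    have h2 : (m + 1) ^ s ≤ (s + 1) ^ s * m.choose s := by
      rcases Nat.eq_zero_or_pos s with rfl | hs
      · simp
      have hi := ih m hsm
      have h3 : (m + 1) ^ s * s ^ s ≤ (s + 1) ^ s * m ^ s := by
        rw [← mul_pow, ← mul_pow]
        apply Nat.pow_le_pow_left
        nlinarith
      have h4 : s ^ s * (m + 1) ^ s ≤ s ^ s * ((s + 1) ^ s * m.choose s) := by
        calc s ^ s * (m + 1) ^ s = (m + 1) ^ s * s ^ s := by ring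
          _ ≤ (s + 1) ^ s * m ^ s := h3
          _ ≤ (s + 1) ^ s * (s ^ s * m.choose s) := Nat.mul_le_mul_left _ hi
          _ = _ := by ring
      exact Nat.le_of_mul_le_mul_left h4 (by positivity)
    calc (m + 1) ^ (s + 1) = (m + 1) * (m + 1) ^ s := by ring
      _ ≤ (m + 1) * ((s + 1) ^ s * m.choose s) := Nat.mul_le_mul_left _ h2
      _ = (s + 1) ^ s * ((m + 1) * m.choose s) := by ring
      _ = (s + 1) ^ s * ((m + 1).choose (s + 1) * (s + 1)) := by rw [h1]
      _ = _ := by ring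

section
variable {H : Type*} [Fintype H] [DecidableEq H] {m : ℕ}

lemma pres_real (hH : Fintype.card H = 2 * m) (hm : 0 < m) (V : Finset H) (r : ℕ)
    (hV : V.card ≤ 2 * r) :
    (((Mt H).filter (fun σ => V.map σ.toEmbedding = V)).card : ℝ) ≤
      (Mt H).card * (Real.sqrt ((r : ℝ) / m)) ^ V.card := by
  rcases Finset.eq_empty_or_nonempty ((Mt H).filter (fun σ => V.map σ.toEmbedding = V)) with h | h
  · rw [h]; simp; positivity
  obtain ⟨σ, hσ⟩ := h
  rw [mem_filter, mem_Mt] at hσ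
  have hev : Even V.card := by
    have : ∑ x ∈ V, (1 : ZMod 2) = 0 := by
      refine Finset.sum_involution (fun x _ => σ x) ?_ ?_ ?_ ?_
      · intros; decide
      · intro a _ _; exact hσ.1.2 a
      · intro a ha
        have : σ a ∈ V.map σ.toEmbedding := by simpa using ha
        rwa [hσ.2] at this
      · intro a _; exact hσ.1.1 a
    simp only [sum_const, nsmul_eq_mul, mul_one] at this
    rw [ZMod.natCast_eq_zero_iff] at this
    exact even_iff_two_dvd.2 this
  obtain ⟨s, hs⟩ := hev
  have hs2 : V.card = 2 * s := by omega
  have h1 := card_pres_le hH V s hs2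
  have hsm : s ≤ m := by
    have := Finset.card_le_univ V
    omega
  have h2 := pow_le_choose_mul s m hsm
  have hsr : s ≤ r := by omega
  have h3 : (1 : ℝ) ≤ ((r : ℝ) / m) ^ s * m.choose s := by
    have hm' : (0 : ℝ) < m := by exact_mod_cast hm
    have h2' : (m : ℝ) ^ s ≤ (s : ℝ) ^ s * m.choose s := by exact_mod_cast h2
    have hsr' : (s : ℝ) ^ s ≤ (r : ℝ) ^ s := by
      apply pow_le_pow_left₀ (by positivity); exact_mod_cast hsr
    rw [div_pow, div_mul_eq_mul_div, le_div_iff₀ (by positivity), one_mul]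
    exact h2'.trans (mul_le_mul_of_nonneg_right hsr' (by positivity))
  rw [hs2, pow_mul, Real.sq_sqrt (by positivity)]
  have h1' : (((Mt H).filter (fun σ => V.map σ.toEmbedding = V)).card : ℝ) * m.choose s
      ≤ (Mt H).card := by exact_mod_cast h1
  set N := (((Mt H).filter (fun σ => V.map σ.toEmbedding = V)).card : ℝ)
  have hN : 0 ≤ N := by positivity
  have hq : 0 ≤ ((r : ℝ) / m) ^ s := by positivity
  calc N = N * 1 := by ring
    _ ≤ N * (((r : ℝ) / m) ^ s * m.choose s) := mul_le_mul_of_nonneg_left h3 hN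
    _ = (N * m.choose s) * ((r : ℝ) / m) ^ s := by ring
    _ ≤ _ := mul_le_mul_of_nonneg_right h1' hq
end

lemma sum_good (d : ℕ) (y : ℝ) (h0 : 0 ≤ y) (h1 : y ≤ 1) :
    ∑ A ∈ (univ : Finset (Finset (Fin d))).filter (fun A => A.card ≠ 1), y ^ A.card
      ≤ 1 + 2 ^ d * y ^ 2 := by
  have hle : ∀ A ∈ (univ : Finset (Finset (Fin d))).filter (fun A => A.card ≠ 1),
      y ^ A.card ≤ (if A = ∅ then 1 else 0) + y ^ 2 := by
    intro A hA
    simp only [mem_filter, mem_univ, true_and] at hA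
    by_cases hA0 : A = ∅
    · subst hA0; simp; positivity
    · rw [if_neg hA0, zero_add]
      apply pow_le_pow_of_le_one h0 h1
      have := Finset.card_pos.2 (Finset.nonempty_iff_ne_empty.2 hA0)
      omega
  refine (Finset.sum_le_sum hle).trans ?_
  rw [Finset.sum_add_distrib, Finset.sum_const, nsmul_eq_mul]
  apply add_le_add
  · rw [Finset.sum_ite_eq']; split_ifs <;> norm_num
  · apply mul_le_mul_of_nonneg_right _ (by positivity)
    have : ((univ : Finset (Finset (Fin d))).filter (fun A => A.card ≠ 1)).card ≤ 2 ^ d := by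
      refine (Finset.card_le_univ _).trans ?_
      simp
    exact_mod_cast this

lemma sparse_bound (n d p m k : ℕ) (hnd : n * d = 2 * m) (hm : 0 < m)
    (v : Fin n → ZMod p) (hk : (univ.filter (fun l => v l ≠ 0)).card = k)
    (y : ℝ) (hy : y = Real.sqrt (((d * k : ℕ) : ℝ) / m)) (hy1 : y ≤ 1) :
    (((Mt (Fin n × Fin d)).filter (fun σ => ∀ l, ∑ i, v (σ (l, i)).1 = 0)).card : ℝ) ≤
      (Mt (Fin n × Fin d)).card * (y ^ (d * k) * (1 + 2 ^ d * y ^ 2) ^ n) := by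
  classical
  have hH : Fintype.card (Fin n × Fin d) = 2 * m := by simp [hnd]
  have hy0 : 0 ≤ y := by rw [hy]; positivity
  set J : Finset (Fin n × Fin d) := univ.filter (fun h => v h.1 ≠ 0) with hJ
  have hJc : J.card = d * k := by
    have : J = (univ.filter (fun l => v l ≠ 0)) ×ˢ (univ : Finset (Fin d)) := by
      ext ⟨a, b⟩; simp [hJ]
    rw [this, Finset.card_product, hk]; simp [mul_comm]
  set G : Finset (Finset (Fin d)) := univ.filter (fun A => A.card ≠ 1)
  let D : Equiv.Perm (Fin n × Fin d) → (Fin n → Finset (Fin d)) :=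
    fun σ l => univ.filter (fun i => (l, i) ∉ J ∧ σ (l, i) ∈ J)
  set S := (Mt (Fin n × Fin d)).filter (fun σ => ∀ l, ∑ i, v (σ (l, i)).1 = 0)
  have hmaps : ∀ σ ∈ S, D σ ∈ Fintype.piFinset (fun _ : Fin n => G) := by
    intro σ hσ
    rw [Fintype.mem_piFinset]
    intro l
    simp only [G, mem_filter, mem_univ, true_and]
    intro h1
    rw [mem_filter] at hσ
    obtain ⟨i, hi⟩ := Finset.card_eq_one.1 h1
    have hiD : i ∈ D σ l := by rw [hi]; simp
    simp only [D, mem_filter, mem_univ, true_and] at hiD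
    have hs := hσ.2 l
    rw [Finset.sum_eq_single i] at hs
    · have := hiD.2
      simp only [hJ, mem_filter, mem_univ, true_and] at this
      exact this hs
    · intro j _ hj
      by_contra hne
      have : j ∈ D σ l := by
        simp only [D, mem_filter, mem_univ, true_and]
        refine ⟨?_, by simpa [hJ] using hne⟩
        have := hiD.1
        simpa [hJ] using this
      rw [hi] at this
      exact hj (by simpa using this)
    · simp
  have hcard : S.card = ∑ A ∈ Fintype.piFinset (fun _ : Fin n => G),
      (S.filter (fun σ => D σ = A)).card := Finset.card_eq_sum_card_fiberwise hmaps
  have hterm : ∀ A ∈ Fintype.piFinset (fun _ : Fin n => G),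
      ((S.filter (fun σ => D σ = A)).card : ℝ) ≤
        (Mt (Fin n × Fin d)).card * (y ^ (d * k) * ∏ l, y ^ (A l).card) := by
    intro A _
    rcases Finset.eq_empty_or_nonempty (S.filter (fun σ => D σ = A)) with he | ⟨σ0, hσ0⟩
    · rw [he]; simp; positivity
    set E : Finset (Fin n × Fin d) := univ.filter (fun h => h.2 ∈ A h.1) with hE
    have hEc : E.card = ∑ l, (A l).card := by
      have : E = ((univ : Finset (Fin n)).sigma A).map (Equiv.sigmaEquivProd _ _).toEmbedding := by
        ext ⟨a, b⟩
        simp only [hE, mem_filter, mem_univ, true_and, mem_map, Equiv.coe_toEmbedding]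
        constructor
        · intro h; exact ⟨⟨a, b⟩, by simpa using h, rfl⟩
        · rintro ⟨⟨a', b'⟩, h, h2⟩
          simp at h h2
          obtain ⟨rfl, rfl⟩ := h2
          exact h
      rw [this, Finset.card_map, Finset.card_sigma]
    have hEσ : ∀ σ, D σ = A → ∀ h, h ∈ E ↔ (h ∉ J ∧ σ h ∈ J) := by
      intro σ hσ h
      simp [hE, ← hσ, D]
    simp only [mem_filter] at hσ0
    have hdis : Disjoint J E := by
      rw [Finset.disjoint_left]
      intro h hJ' hE'
      exact ((hEσ σ0 hσ0.2 h).1 hE').1 hJ'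
    have hEle : E.card ≤ d * k := by
      rw [← hJc]
      refine Finset.card_le_card_of_injOn σ0 ?_ (σ0.injective.injOn)
      intro h hh
      exact ((hEσ σ0 hσ0.2 h).1 hh).2
    have hVc : (J ∪ E).card = d * k + ∑ l, (A l).card := by
      rw [Finset.card_union_of_disjoint hdis, hJc, hEc]
    have hsub : S.filter (fun σ => D σ = A) ⊆
        (Mt (Fin n × Fin d)).filter (fun σ => (J ∪ E).map σ.toEmbedding = J ∪ E) := by
      intro σ hσ
      simp only [S, mem_filter] at hσ ⊢
      refine ⟨hσ.1.1, ?_⟩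
      have hinv := (mem_Mt σ).1 hσ.1.1
      apply Finset.eq_of_subset_of_card_le
      · intro x hx
        simp only [mem_map, Equiv.coe_toEmbedding] at hx
        obtain ⟨h, hh, rfl⟩ := hx
        rw [mem_union] at hh ⊢
        by_cases hσJ : σ h ∈ J
        · exact Or.inl hσJ
        · right
          rw [hEσ σ hσ.2]
          refine ⟨hσJ, ?_⟩
          rw [hinv.1]
          rcases hh with hh | hh
          · exact hh
          · exact absurd ((hEσ σ hσ.2 h).1 hh).2 hσJ
      · simp
    have := pres_real hH hm (J ∪ E) (d * k) (by rw [hVc, ← hEc]; omega)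
    rw [← hy, hVc, pow_add, ← Finset.prod_pow_eq_pow_sum] at this
    refine le_trans ?_ this
    exact_mod_cast Finset.card_le_card hsub
  calc (S.card : ℝ) = ∑ A ∈ Fintype.piFinset (fun _ : Fin n => G),
      ((S.filter (fun σ => D σ = A)).card : ℝ) := by rw [hcard]; push_cast; rfl
    _ ≤ ∑ A ∈ Fintype.piFinset (fun _ : Fin n => G),
        (Mt (Fin n × Fin d)).card * (y ^ (d * k) * ∏ l, y ^ (A l).card) := Finset.sum_le_sum hterm
    _ = (Mt (Fin n × Fin d)).card * (y ^ (d * k) * (∑ A ∈ G, y ^ A.card) ^ n) := by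
        rw [← Finset.mul_sum, ← Finset.mul_sum]
        congr 2
        rw [Finset.sum_prod_piFinset G (fun _ A => y ^ A.card)]
        simp
    _ ≤ _ := by
        apply mul_le_mul_of_nonneg_left _ (by positivity)
        apply mul_le_mul_of_nonneg_left _ (by positivity)
        apply pow_le_pow_left₀ (Finset.sum_nonneg fun _ _ => by positivity)
        exact sum_good d y hy0 hy1

end UCNV

namespace UCNV
set_option linter.unusedSectionVars false

section
variable {H G : Type*} [Fintype H] [DecidableEq H] [Fintype G] [DecidableEq G] {m : ℕ}

/-- number of occurrences -/
def cnt (x : H → G) (a : G) : ℕ := (univ.filter (fun h => x h = a)).card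

lemma sum_comp_cnt {R : Type*} [CommSemiring R] (x : H → G) (f : G → R) :
    ∑ h, f (x h) = ∑ a, (cnt x a : R) * f a := by
  rw [← Finset.sum_fiberwise univ x]
  refine Finset.sum_congr rfl fun a _ => ?_
  rw [cnt, ← nsmul_eq_mul, ← Finset.sum_const]
  refine Finset.sum_congr rfl fun h hh => ?_
  simp only [mem_filter, mem_univ, true_and] at hh
  rw [hh]

lemma prod_comp_cnt {R : Type*} [CommMonoid R] (x : H → G) (f : G → R) :
    ∏ h, f (x h) = ∏ a, f a ^ cnt x a := by
  rw [← Finset.prod_fiberwise univ x]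
  refine Finset.prod_congr rfl fun a _ => ?_
  rw [cnt, ← Finset.prod_const]
  refine Finset.prod_congr rfl fun h hh => ?_
  simp only [mem_filter, mem_univ, true_and] at hh
  rw [hh]

lemma sum_cnt (x : H → G) : ∑ a, cnt x a = Fintype.card H := by
  have := sum_comp_cnt (R := ℕ) x (fun _ => 1)
  simp at this
  exact this.symm

lemma cnt_le (x : H → G) (a : G) : cnt x a ≤ Fintype.card H := Finset.card_le_univ _

lemma exists_equiv_of_cnt {K : Type*} [Fintype K] [DecidableEq K] (x : H → G) (y : K → G)
    (h : cnt x = cnt y) : ∃ e : K ≃ H, x ∘ e = y := by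
  have hc : ∀ a, Nonempty ({k // y k = a} ≃ {h // x h = a}) := by
    intro a
    rw [← Fintype.card_eq]
    rw [Fintype.card_subtype, Fintype.card_subtype]
    exact (congrFun h a).symm
  let e : K ≃ H := (Equiv.sigmaFiberEquiv y).symm.trans
    ((Equiv.sigmaCongrRight fun a => (hc a).some).trans (Equiv.sigmaFiberEquiv x))
  refine ⟨e, ?_⟩
  ext k
  simp only [Function.comp, e, Equiv.trans_apply]
  exact ((hc (y k)).some ⟨k, rfl⟩).2

lemma card_fiber_comp {K : Type*} [Fintype K] [DecidableEq K] (x : H → G) (y : K → G)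
    (h : cnt x = cnt y) :
    (univ.filter (fun e : K ≃ H => x ∘ e = y)).card = ∏ a, (cnt x a).factorial := by
  obtain ⟨e0, he0⟩ := exists_equiv_of_cnt x y h
  have h1 := DomMulAct.stabilizer_card x
  have h2 : ∏ a, (Fintype.card {h // x h = a}).factorial = ∏ a, (cnt x a).factorial := by
    refine Finset.prod_congr rfl fun a _ => ?_
    rw [Fintype.card_subtype]; rfl
  rw [← h2, ← h1, Fintype.card_subtype]
  refine Finset.card_bij' (fun e _ => e0.symm.trans e) (fun g _ => e0.trans g) ?_ ?_ ?_ ?_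
  · intro e he
    simp only [mem_filter, mem_univ, true_and] at he ⊢
    funext a
    have := congrFun (he.trans he0.symm) (e0.symm a)
    simpa using this
  · intro g hg
    simp only [mem_filter, mem_univ, true_and] at hg ⊢
    rw [← he0]
    funext a
    have := congrFun hg (e0 a)
    simpa using this
  · intro e _; ext; simp
  · intro e _; ext; simp

/-- Sum over bijections reduces to a sum over words of the given type. -/
lemma sum_equiv_eq {K : Type*} [Fintype K] [DecidableEq K] (x : H → G)
    (hKH : Fintype.card K = Fintype.card H) (F : (K → G) → ℂ) :
    ∑ e : K ≃ H, F (x ∘ e) =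
      (∏ a, (cnt x a).factorial : ℕ) * ∑ y ∈ univ.filter (fun y : K → G => cnt x = cnt y), F y := by
  have hmaps : ∀ e ∈ (univ : Finset (K ≃ H)), x ∘ e ∈ univ.filter
      (fun y : K → G => cnt x = cnt y) := by
    intro e _
    simp only [mem_filter, mem_univ, true_and]
    funext a
    refine Finset.card_bij' (fun h _ => e.symm h) (fun k _ => e k) ?_ ?_ ?_ ?_ <;> simp
  rw [← Finset.sum_fiberwise_of_maps_to hmaps, Finset.mul_sum]
  refine Finset.sum_congr rfl fun y hy => ?_
  simp only [mem_filter, mem_univ, true_and] at hy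
  rw [← card_fiber_comp x y hy, ← nsmul_eq_mul, ← Finset.sum_const]
  refine Finset.sum_congr rfl fun e he => ?_
  simp only [mem_filter, mem_univ, true_and] at he
  rw [he]

lemma addChar_sum {A R ι : Type*} [AddCommMonoid A] [CommMonoid R] (χ : AddChar A R) (s : Finset ι)
    (f : ι → A) : χ (∑ i ∈ s, f i) = ∏ i ∈ s, χ (f i) := by
  classical
  induction s using Finset.induction_on with
  | empty => simp
  | insert a s ha ih => rw [Finset.sum_insert ha, Finset.prod_insert ha, AddChar.map_add_eq_mul, ih]

/-- orthogonality -/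
lemma phase_orth (N : ℕ) [NeZero N] {K : Type*} [Fintype K] [DecidableEq K] (x : H → G) (y : K → G)
    (hN1 : Fintype.card H < N) (hN2 : Fintype.card K < N) :
    ∑ k : G → ZMod N, (∏ j, ZMod.stdAddChar (k (y j))) * ZMod.stdAddChar (-∑ h, k (x h)) =
      if cnt x = cnt y then ((N : ℂ) ^ Fintype.card G) else 0 := by
  classical
  let ψ : AddChar (G → ZMod N) ℂ :=
    { toFun := fun k => ZMod.stdAddChar (∑ j, k (y j) - ∑ h, k (x h))
      map_zero_eq_one' := by simp
      map_add_eq_mul' := by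
        intro k l
        rw [← AddChar.map_add_eq_mul]
        congr 1
        simp only [Pi.add_apply, Finset.sum_add_distrib]; ring }
  have hψ : ∀ k, (∏ j, ZMod.stdAddChar (k (y j))) * ZMod.stdAddChar (-∑ h, k (x h)) = ψ k := by
    intro k
    change _ = ZMod.stdAddChar (∑ j, k (y j) - ∑ h, k (x h))
    rw [sub_eq_add_neg, AddChar.map_add_eq_mul, addChar_sum]
  simp_rw [hψ]
  rw [AddChar.sum_eq_ite]
  have hiff : ψ = 0 ↔ cnt x = cnt y := by
    constructor
    · intro h0
      funext a
      have h1 : ψ (Pi.single a 1) = 1 := by rw [h0]; rfl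
      change ZMod.stdAddChar (∑ j, (Pi.single a 1 : G → ZMod N) (y j)
        - ∑ h, (Pi.single a 1 : G → ZMod N) (x h)) = 1 at h1
      rw [sum_comp_cnt, sum_comp_cnt, ← AddChar.map_zero_eq_one (ZMod.stdAddChar (N := N))] at h1
      have h2 := ZMod.injective_stdAddChar h1
      simp [Pi.single_apply] at h2
      rw [sub_eq_zero, ZMod.natCast_eq_natCast_iff'] at h2
      rw [Nat.mod_eq_of_lt (lt_of_le_of_lt (cnt_le y a) hN2),
        Nat.mod_eq_of_lt (lt_of_le_of_lt (cnt_le x a) hN1)] at h2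
      exact h2.symm
    · intro h
      ext k
      change ZMod.stdAddChar (∑ j, k (y j) - ∑ h, k (x h)) = 1
      rw [sum_comp_cnt, sum_comp_cnt, h]; simp
  simp only [hiff]
  split_ifs <;> simp

/-- Cauchy estimate. -/
lemma cauchy_bound (hH : Fintype.card H = 2 * m) (x : H → G) (C : G → G → ℂ) (r : G → ℝ) (Q : ℝ)
    (hQ : ∀ u : G → ℂ, (∀ a, ‖u a‖ = 1) →
      ‖∑ a, ∑ b, C a b * ((r a : ℂ) * u a) * ((r b : ℂ) * u b)‖ ≤ Q)
    (hr : ∀ a, 0 ≤ r a) :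
    ‖∑ e : Fin m × Bool ≃ H, ∏ j : Fin m, C (x (e (j, true))) (x (e (j, false)))‖ * ∏ h, r (x h) ≤
      (∏ a, (cnt x a).factorial : ℕ) * Q ^ m := by
  classical
  let N := 2 * m + 1
  haveI : NeZero N := ⟨by omega⟩
  have hKH : Fintype.card (Fin m × Bool) = Fintype.card H := by simp [hH, mul_comm]
  have h1 := sum_equiv_eq (K := Fin m × Bool) x hKH
    (fun y => ∏ j : Fin m, C (y (j, true)) (y (j, false)))
  simp only [Function.comp] at h1
  rw [h1, norm_mul, mul_assoc, Complex.norm_natCast]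
  apply mul_le_mul_of_nonneg_left _ (by positivity)
  set T := ∑ y ∈ univ.filter (fun y : Fin m × Bool → G => cnt x = cnt y),
    ∏ j : Fin m, C (y (j, true)) (y (j, false)) with hT
  -- the polynomial
  let u : (G → ZMod N) → G → ℂ := fun k a => ZMod.stdAddChar (k a)
  have hu : ∀ k a, ‖u k a‖ = 1 := by
    intro k a; exact Circle.norm_coe _
  have hpow : ∀ k, (∑ a, ∑ b, C a b * ((r a : ℂ) * u k a) * ((r b : ℂ) * u k b)) ^ m =
      ∑ y : Fin m × Bool → G, (∏ j : Fin m, C (y (j, true)) (y (j, false))) *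
        (∏ q, (r (y q) : ℂ)) * ∏ q, u k (y q) := by
    intro k
    rw [← Fintype.sum_prod_type' (f := fun a b => C a b * ((r a : ℂ) * u k a) * ((r b : ℂ) * u k b)),
      Fintype.sum_pow]
    let eq1 : (Fin m → G × G) ≃ (Fin m × Bool → G) :=
      { toFun := fun f q => if q.2 then (f q.1).1 else (f q.1).2
        invFun := fun y j => (y (j, true), y (j, false))
        left_inv := by intro f; funext j; simp
        right_inv := by
          intro y; funext ⟨j, b⟩; cases b <;> simp }
    refine Fintype.sum_equiv eq1 _ _ ?_
    intro f
    rw [Fintype.prod_prod_type, Fintype.prod_prod_type, ← Finset.prod_mul_distrib,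
      ← Finset.prod_mul_distrib]
    refine Finset.prod_congr rfl fun j _ => ?_
    simp [eq1]
    ring
  have hsum : ∑ k : G → ZMod N, (∑ a, ∑ b, C a b * ((r a : ℂ) * u k a) * ((r b : ℂ) * u k b)) ^ m *
      ZMod.stdAddChar (-∑ h, k (x h)) = (N : ℂ) ^ Fintype.card G * (T * ∏ h, (r (x h) : ℂ)) := by
    simp_rw [hpow, Finset.sum_mul]
    rw [Finset.sum_comm]
    have : ∀ y : Fin m × Bool → G, ∑ k : G → ZMod N, (∏ j : Fin m, C (y (j, true)) (y (j, false))) *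
        (∏ q, (r (y q) : ℂ)) * (∏ q, u k (y q)) * ZMod.stdAddChar (-∑ h, k (x h)) =
        if cnt x = cnt y then (N : ℂ) ^ Fintype.card G *
          ((∏ j : Fin m, C (y (j, true)) (y (j, false))) * ∏ h, (r (x h) : ℂ)) else 0 := by
      intro y
      have h2 := phase_orth N x y (by omega) (by omega)
      simp_rw [mul_assoc]
      rw [← Finset.mul_sum, ← Finset.mul_sum]
      change _ * (_ * ∑ k : G → ZMod N, (∏ j, ZMod.stdAddChar (k (y j))) * _) = _
      rw [h2]
      split_ifs with h3
      · rw [prod_comp_cnt y (fun a => (r a : ℂ)), prod_comp_cnt x (fun a => (r a : ℂ)), h3]; ring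
      · simp
    rw [Finset.sum_congr rfl (fun y _ => this y), ← Finset.sum_filter, hT, Finset.sum_mul,
      Finset.mul_sum]
  have hnorm := congrArg norm hsum
  rw [norm_mul, norm_mul, norm_pow, Complex.norm_natCast, norm_prod] at hnorm
  have hr' : ∏ h, ‖(r (x h) : ℂ)‖ = ∏ h, r (x h) :=
    Finset.prod_congr rfl fun h _ => by rw [Complex.norm_real, Real.norm_of_nonneg (hr _)]
  rw [hr'] at hnorm
  have hle : ‖∑ k : G → ZMod N, (∑ a, ∑ b, C a b * ((r a : ℂ) * u k a) * ((r b : ℂ) * u k b)) ^ m *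
      ZMod.stdAddChar (-∑ h, k (x h))‖ ≤ (N : ℝ) ^ Fintype.card G * Q ^ m := by
    refine (norm_sum_le _ _).trans ?_
    refine (Finset.sum_le_card_nsmul univ _ (Q ^ m) ?_).trans ?_
    · intro k _
      rw [norm_mul, norm_pow]
      have : ‖(ZMod.stdAddChar (-∑ h, k (x h)) : ℂ)‖ = 1 := Circle.norm_coe _
      rw [this, mul_one]
      exact pow_le_pow_left₀ (norm_nonneg _) (hQ (u k) (hu k)) m
    · simp
  rw [hnorm] at hle
  exact le_of_mul_le_mul_left hle (by positivity)

end
end UCNV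

namespace UCNV
set_option linter.unusedSectionVars false

lemma zmod2_ne : ∀ z : ZMod 2, z ≠ 0 → z = 1 := by decide

section
variable {p : ℕ} [Fact p.Prime]

/-- the bilinear form -/
def BB (a b : ZMod p × ZMod p) : ZMod p := a.1 * b.2 + b.1 * a.2

/-- the kernel -/
noncomputable def CC (a b : ZMod p × ZMod p) : ℂ := ZMod.stdAddChar (BB a b)

lemma norm_stdAddChar (z : ZMod p) : ‖(ZMod.stdAddChar z : ℂ)‖ = 1 := Circle.norm_coe _

lemma conj_stdAddChar (z : ZMod p) :
    (starRingEnd ℂ) (ZMod.stdAddChar z) = ZMod.stdAddChar (-z) := by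
  rw [AddChar.map_neg_eq_inv, Complex.inv_eq_conj (norm_stdAddChar z)]

lemma BB_sub (a b b' : ZMod p × ZMod p) : BB a (b - b') = BB a b - BB a b' := by
  simp [BB]; ring

lemma BB_sub_left (a a' b : ZMod p × ZMod p) : BB (a - a') b = BB a b - BB a' b := by
  simp [BB]; ring

lemma CC_mul_conj (a b b' : ZMod p × ZMod p) :
    CC a b * (starRingEnd ℂ) (CC a b') = CC a (b - b') := by
  rw [CC, CC, CC, conj_stdAddChar, ← AddChar.map_add_eq_mul, BB_sub, sub_eq_add_neg]

lemma CC_mul_conj' (a a' b : ZMod p × ZMod p) :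
    CC a b * (starRingEnd ℂ) (CC a' b) = CC (a - a') b := by
  rw [CC, CC, CC, conj_stdAddChar, ← AddChar.map_add_eq_mul, BB_sub_left, sub_eq_add_neg]

lemma sum_CC (g : ZMod p × ZMod p) : ∑ a, CC a g = if g = 0 then (p : ℂ) ^ 2 else 0 := by
  let χ : AddChar (ZMod p × ZMod p) ℂ :=
    { toFun := fun a => CC a g
      map_zero_eq_one' := by simp [CC, BB]
      map_add_eq_mul' := by
        intro a b
        simp only [CC]
        rw [← AddChar.map_add_eq_mul]
        congr 1
        simp [BB]; ring }
  have h := AddChar.sum_eq_ite χ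
  change ∑ a, CC a g = _ at h
  rw [h]
  have hiff : χ = 0 ↔ g = 0 := by
    constructor
    · intro h0
      have key : ∀ a, BB a g = 0 := by
        intro a
        have h1 : χ a = 1 := by rw [h0]; rfl
        change (ZMod.stdAddChar (BB a g) : ℂ) = 1 at h1
        rw [← AddChar.map_zero_eq_one (ZMod.stdAddChar (N := p))] at h1
        exact ZMod.injective_stdAddChar h1
      have k1 := key (1, 0)
      have k2 := key (0, 1)
      simp [BB] at k1 k2
      exact Prod.ext k2 k1
    · rintro rfl
      ext a
      change CC a 0 = 1
      simp [CC, BB]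
  simp only [hiff]
  simp [ZMod.card, pow_two]

lemma re_stdAddChar_le (z : ZMod p) (hz : z ≠ 0) :
    (ZMod.stdAddChar z : ℂ).re ≤ 1 - 8 / (p : ℝ) ^ 2 := by
  have hp : 0 < (p : ℝ) := by exact_mod_cast (Fact.out : p.Prime).pos
  set k := z.valMinAbs with hk
  have h1 : (k : ZMod p) = z := ZMod.coe_valMinAbs z
  have h2 : (k.natAbs : ℝ) ≤ p / 2 := by
    have := ZMod.natAbs_valMinAbs_le z
    have h3 : 2 * k.natAbs ≤ p := by rw [hk]; omega
    have h4 : (2 : ℝ) * k.natAbs ≤ p := by exact_mod_cast h3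
    linarith
  have hk0 : k ≠ 0 := by
    intro h; apply hz; rw [← h1, h]; simp
  have h2' : |(k : ℝ)| ≤ p / 2 := by
    rw [Nat.cast_natAbs] at h2; push_cast at h2; exact h2
  have hre : (ZMod.stdAddChar z : ℂ).re = Real.cos (2 * Real.pi * k / p) := by
    rw [← h1, ZMod.stdAddChar_coe, Complex.exp_re]
    have e : (2 * (Real.pi : ℂ) * Complex.I * (k : ℂ) / (p : ℂ)) =
      ((2 * Real.pi * k / p : ℝ) : ℂ) * Complex.I := by push_cast; ring
    rw [e]
    simp
  rw [hre]
  have hx : |2 * Real.pi * k / p| ≤ Real.pi := by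
    rw [abs_div, abs_mul, abs_of_pos hp, abs_of_pos (by positivity), div_le_iff₀ hp]
    nlinarith [Real.pi_pos]
  refine (Real.cos_le_one_sub_mul_cos_sq hx).trans ?_
  have hk1 : (1 : ℝ) ≤ (k : ℝ) ^ 2 := by
    have : (1 : ℤ) ≤ k ^ 2 := by
      have := sq_nonneg k
      have h5 : k ^ 2 ≠ 0 := pow_ne_zero 2 hk0
      omega
    exact_mod_cast this
  have e : 2 / Real.pi ^ 2 * (2 * Real.pi * k / p) ^ 2 = 8 / (p : ℝ) ^ 2 * k ^ 2 := by
    have := Real.pi_pos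
    field_simp; ring
  rw [e]
  have : (0 : ℝ) ≤ 8 / (p : ℝ) ^ 2 := by positivity
  nlinarith

lemma sum_norm_sq_g (f : ZMod p × ZMod p → ℂ) :
    ∑ a, ‖∑ b, CC a b * f b‖ ^ 2 = (p : ℝ) ^ 2 * ∑ b, ‖f b‖ ^ 2 := by
  have key : ((∑ a, ‖∑ b, CC a b * f b‖ ^ 2 : ℝ) : ℂ) = ((p : ℝ) ^ 2 * ∑ b, ‖f b‖ ^ 2 : ℝ) := by
    push_cast
    simp_rw [← Complex.mul_conj', map_sum, map_mul, Finset.sum_mul_sum]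
    rw [Finset.sum_comm]
    rw [Finset.mul_sum]
    refine Finset.sum_congr rfl fun b _ => ?_
    rw [Finset.sum_comm]
    have : ∀ b', ∑ a, CC a b * f b * ((starRingEnd ℂ) (CC a b') * (starRingEnd ℂ) (f b')) =
        if b = b' then (p : ℂ) ^ 2 * (f b * (starRingEnd ℂ) (f b')) else 0 := by
      intro b'
      have h1 : ∀ a, CC a b * f b * ((starRingEnd ℂ) (CC a b') * (starRingEnd ℂ) (f b')) =
          CC a (b - b') * (f b * (starRingEnd ℂ) (f b')) := by
        intro a; rw [← CC_mul_conj]; ring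
      simp_rw [h1]
      rw [← Finset.sum_mul, sum_CC]
      simp only [sub_eq_zero, ite_mul, zero_mul]
    simp_rw [this]
    simp
  exact_mod_cast key

lemma Q_boundA (f : ZMod p × ZMod p → ℂ) (hf : ∑ a, ‖f a‖ ^ 2 ≤ 1) :
    ‖∑ a, ∑ b, CC a b * f a * f b‖ ≤ p := by
  have h1 : ‖∑ a, ∑ b, CC a b * f a * f b‖ ≤ ∑ a, ‖f a‖ * ‖∑ b, CC a b * f b‖ := by
    refine (norm_sum_le _ _).trans (Finset.sum_le_sum fun a _ => ?_)
    rw [← norm_mul, Finset.mul_sum]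
    apply le_of_eq; congr 1
    refine Finset.sum_congr rfl fun b _ => by ring
  have h2 := Finset.sum_mul_sq_le_sq_mul_sq univ (fun a => ‖f a‖) (fun a => ‖∑ b, CC a b * f b‖)
  rw [sum_norm_sq_g] at h2
  refine h1.trans ?_
  apply abs_le_of_sq_le_sq' _ (by positivity) |>.2
  refine h2.trans ?_
  have h3 : 0 ≤ ∑ a, ‖f a‖ ^ 2 := by positivity
  nlinarith [sq_nonneg (p : ℝ), mul_le_mul hf hf h3 zero_le_one]

/-- the Fourier transform of the weight -/
noncomputable def Phi (ν : ZMod p × ZMod p → ℝ) (g : ZMod p × ZMod p) : ℂ :=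
  ∑ a, (ν a : ℂ) * CC a g

lemma Phi_sq (ν : ZMod p × ZMod p → ℝ) (g : ZMod p × ZMod p) :
    ‖Phi ν g‖ ^ 2 = ∑ a, ∑ a', ν a * ν a' * (CC (a - a') g).re := by
  have h : ((‖Phi ν g‖ ^ 2 : ℝ) : ℂ) = ∑ a, ∑ a', ((ν a * ν a' : ℝ) : ℂ) * CC (a - a') g := by
    push_cast
    rw [← Complex.mul_conj', Phi, map_sum, Finset.sum_mul_sum]
    refine Finset.sum_congr rfl fun a _ => Finset.sum_congr rfl fun a' _ => ?_
    rw [← CC_mul_conj', map_mul, Complex.conj_ofReal]; ring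
  have h2 := congrArg Complex.re h
  rw [Complex.ofReal_re] at h2
  rw [h2]
  simp only [Complex.re_sum, Complex.re_ofReal_mul]

/-- weighted power mean -/
lemma wmean {ι : Type*} [Fintype ι] (w z : ι → ℝ) (hw : ∀ i, 0 ≤ w i) (hs : ∑ i, w i = 1) :
    (∑ i, w i * z i) ^ 2 ≤ ∑ i, w i * z i ^ 2 := by
  have := Finset.sum_mul_sq_le_sq_mul_sq univ (fun i => √(w i)) (fun i => √(w i) * z i)
  simp only [mul_pow, ← mul_assoc, Real.mul_self_sqrt (hw _), Real.sq_sqrt (hw _), hs, one_mul] at this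
  exact this

lemma Q_le_E (ν : ZMod p × ZMod p → ℝ) (hν : ∀ a, 0 ≤ ν a) (hs : ∑ a, ν a = 1)
    (u : ZMod p × ZMod p → ℂ) (hu : ∀ a, ‖u a‖ = 1) :
    ‖∑ a, ∑ b, CC a b * ((ν a : ℂ) * u a) * ((ν b : ℂ) * u b)‖ ^ 4 ≤
      ∑ b, ∑ b', ν b * ν b' * ‖Phi ν (b - b')‖ ^ 2 := by
  set f : ZMod p × ZMod p → ℂ := fun a => (ν a : ℂ) * u a with hf
  have hfn : ∀ a, ‖f a‖ = ν a := by
    intro a; simp [hf, hu, abs_of_nonneg (hν a)]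
  have h1 : ‖∑ a, ∑ b, CC a b * f a * f b‖ ≤ ∑ a, ν a * ‖∑ b, CC a b * f b‖ := by
    refine (norm_sum_le _ _).trans (Finset.sum_le_sum fun a _ => ?_)
    rw [← hfn, ← norm_mul, Finset.mul_sum]
    apply le_of_eq; congr 1
    refine Finset.sum_congr rfl fun b _ => by ring
  have h2 := wmean ν (fun a => ‖∑ b, CC a b * f b‖) hν hs
  have h3 : ((∑ a, ν a * ‖∑ b, CC a b * f b‖ ^ 2 : ℝ) : ℂ) =
      ∑ b, ∑ b', f b * (starRingEnd ℂ) (f b') * Phi ν (b - b') := by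
    push_cast
    simp_rw [← Complex.mul_conj', map_sum, map_mul, Finset.sum_mul_sum, Finset.mul_sum, Phi]
    rw [Finset.sum_comm]
    refine Finset.sum_congr rfl fun b _ => ?_
    rw [Finset.sum_comm]
    refine Finset.sum_congr rfl fun b' _ => ?_
    rw [Finset.mul_sum]
    refine Finset.sum_congr rfl fun a _ => ?_
    rw [← CC_mul_conj]; ring
  have h4 : ∑ a, ν a * ‖∑ b, CC a b * f b‖ ^ 2 ≤ ∑ b, ∑ b', ν b * ν b' * ‖Phi ν (b - b')‖ := by
    have h5 : 0 ≤ ∑ a, ν a * ‖∑ b, CC a b * f b‖ ^ 2 :=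
      Finset.sum_nonneg fun a _ => mul_nonneg (hν a) (by positivity)
    rw [← Real.norm_of_nonneg h5, ← Complex.norm_real, h3]
    refine (norm_sum_le _ _).trans (Finset.sum_le_sum fun b _ => ?_)
    refine (norm_sum_le _ _).trans (Finset.sum_le_sum fun b' _ => ?_)
    rw [norm_mul, norm_mul, RCLike.norm_conj, hfn, hfn]
  have h6 := wmean (fun q : (ZMod p × ZMod p) × (ZMod p × ZMod p) => ν q.1 * ν q.2)
    (fun q => ‖Phi ν (q.1 - q.2)‖) (fun q => mul_nonneg (hν _) (hν _))
    (by rw [Fintype.sum_prod_type]; simp only [← Finset.mul_sum, hs, mul_one])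
  rw [Fintype.sum_prod_type (fun q : (ZMod p × ZMod p) × (ZMod p × ZMod p) => ν q.1 * ν q.2 * ‖Phi ν (q.1 - q.2)‖), Fintype.sum_prod_type (fun q : (ZMod p × ZMod p) × (ZMod p × ZMod p) => ν q.1 * ν q.2 * ‖Phi ν (q.1 - q.2)‖ ^ 2)] at h6
  refine le_trans ?_ h6
  have h7 : ‖∑ a, ∑ b, CC a b * f a * f b‖ ^ 2 ≤ ∑ b, ∑ b', ν b * ν b' * ‖Phi ν (b - b')‖ :=
    (pow_le_pow_left₀ (norm_nonneg _) h1 2).trans (h2.trans h4)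
  calc ‖∑ a, ∑ b, CC a b * f a * f b‖ ^ 4 = (‖∑ a, ∑ b, CC a b * f a * f b‖ ^ 2) ^ 2 := by ring
    _ ≤ _ := pow_le_pow_left₀ (by positivity) h7 2

/-- probability of nonorthogonality -/
noncomputable def dl (ν : ZMod p × ZMod p → ℝ) (g : ZMod p × ZMod p) : ℝ :=
  ∑ a, ∑ a', ν a * ν a' * (if BB (a - a') g = 0 then 0 else 1)

lemma Phi_le (ν : ZMod p × ZMod p → ℝ) (hν : ∀ a, 0 ≤ ν a) (hs : ∑ a, ν a = 1)
    (g : ZMod p × ZMod p) : ‖Phi ν g‖ ^ 2 ≤ 1 - 8 / (p : ℝ) ^ 2 * dl ν g := by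
  have h1 : (1 : ℝ) = ∑ a, ∑ a', ν a * ν a' := by
    simp only [← Finset.mul_sum, hs, mul_one]
  rw [Phi_sq, dl, Finset.mul_sum]
  nth_rewrite 1 [h1]
  rw [ ← Finset.sum_sub_distrib]
  refine Finset.sum_le_sum fun a _ => ?_
  rw [Finset.mul_sum, ← Finset.sum_sub_distrib]
  refine Finset.sum_le_sum fun a' _ => ?_
  have h2 := mul_nonneg (hν a) (hν a')
  split_ifs with h
  · rw [CC, h]; simp
  · have := mul_le_mul_of_nonneg_left (re_stdAddChar_le _ h) h2
    rw [CC]; nlinarith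

lemma dl_nonneg (ν : ZMod p × ZMod p → ℝ) (hν : ∀ a, 0 ≤ ν a) (g : ZMod p × ZMod p) :
    0 ≤ dl ν g := by
  refine Finset.sum_nonneg fun a _ => Finset.sum_nonneg fun a' _ => ?_
  have h2 := mul_nonneg (hν a) (hν a')
  split_ifs <;> simp [h2]

lemma dl_ge (ν : ZMod p × ZMod p → ℝ) (hν : ∀ a, 0 ≤ ν a) (hs : ∑ a, ν a = 1)
    (g : ZMod p × ZMod p) (τ : ℝ)
    (h : ∀ e, ∑ a ∈ univ.filter (fun a => BB a g = e), ν a ≤ 1 - τ) : τ ≤ dl ν g := by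
  rw [dl]
  calc τ = ∑ a, ν a * τ := by rw [← Finset.sum_mul, hs, one_mul]
    _ ≤ _ := by
      refine Finset.sum_le_sum fun a _ => ?_
      simp_rw [mul_assoc]
      rw [← Finset.mul_sum]
      refine mul_le_mul_of_nonneg_left ?_ (hν a)
      have h1 := h (BB a g)
      have h2 := Finset.sum_filter_add_sum_filter_not univ (fun a' => BB a' g = BB a g) ν
      rw [hs] at h2
      have h3 : ∑ a', ν a' * (if BB (a - a') g = 0 then (0:ℝ) else 1) =
          ∑ a' ∈ univ.filter (fun a' => ¬ BB a' g = BB a g), ν a' := by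
        rw [Finset.sum_filter]
        refine Finset.sum_congr rfl fun a' _ => ?_
        by_cases hq : BB a' g = BB a g
        · rw [if_pos (by rw [BB_sub_left, hq, sub_self]), if_neg (not_not.2 hq), mul_zero]
        · rw [if_neg (by rw [BB_sub_left, sub_eq_zero]; exact fun q => hq q.symm), if_pos hq, mul_one]
      linarith

/-- the stability bound -/
lemma stab (ν : ZMod p × ZMod p → ℝ) (hν : ∀ a, 0 ≤ ν a) (hs : ∑ a, ν a = 1) (τ : ℝ)
    (hτ0 : 0 ≤ τ) (hτ : τ ≤ 1 / 16) (hpt : ∀ a, ν a ≤ 7 / 8)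
    (h1 : ∀ c, ∑ a ∈ univ.filter (fun a : ZMod p × ZMod p => a.1 = c), ν a ≤ 1 - τ)
    (h2 : ∀ c, ∑ a ∈ univ.filter (fun a : ZMod p × ZMod p => a.2 = c), ν a ≤ 1 - τ)
    (h3 : p = 2 → ∀ c, ∑ a ∈ univ.filter (fun a : ZMod p × ZMod p => a.1 + a.2 = c), ν a ≤ 1 - τ) :
    τ / 128 ≤ ∑ b, ∑ b', ν b * ν b' * dl ν (b - b') := by
  have hnn : ∀ b b', 0 ≤ ν b * ν b' := fun b b' => mul_nonneg (hν b) (hν b')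
  by_cases hall : ∀ g : ZMod p × ZMod p, g ≠ 0 → ∀ e,
      ∑ a ∈ univ.filter (fun a => BB a g = e), ν a ≤ 1 - τ
  · have hg : ∀ b b', ν b * ν b' * dl ν (b - b') ≥ ν b * ((if b' = b then 0 else ν b') * τ) := by
      intro b b'
      split_ifs with h
      · simpa using mul_nonneg (hnn b b') (dl_nonneg ν hν _)
      · have := dl_ge ν hν hs (b - b') τ (hall _ (sub_ne_zero.2 (fun q => h q.symm)))
        rw [← mul_assoc]
        exact mul_le_mul_of_nonneg_left this (hnn b b')
    have h4 : ∀ b, ∑ b', (if b' = b then 0 else ν b') ≥ 1 / 8 := by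
      intro b
      have : ∀ b', (if b' = b then 0 else ν b') = ν b' - (if b' = b then ν b' else 0) := by
        intro b'; split_ifs <;> simp
      simp_rw [this]
      rw [Finset.sum_sub_distrib, hs]
      simp
      linarith [hpt b]
    calc τ / 128 ≤ ∑ b, ν b * (1 / 8 * τ) := by rw [← Finset.sum_mul, hs]; linarith
      _ ≤ ∑ b, ν b * ((∑ b', (if b' = b then 0 else ν b')) * τ) := by
        refine Finset.sum_le_sum fun b _ => mul_le_mul_of_nonneg_left
          (mul_le_mul_of_nonneg_right (h4 b) hτ0) (hν b)
      _ ≤ _ := by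
        refine Finset.sum_le_sum fun b _ => ?_
        rw [Finset.sum_mul, Finset.mul_sum]
        exact Finset.sum_le_sum fun b' _ => hg b b'
  · push Not at hall
    obtain ⟨g, hg0, e, hge⟩ := hall
    have hg1 : g.1 ≠ 0 := by
      intro h
      have hg2 : g.2 ≠ 0 := fun h' => hg0 (Prod.ext h h')
      have := h1 (e / g.2)
      have hset : univ.filter (fun a : ZMod p × ZMod p => a.1 = e / g.2) =
          univ.filter (fun a => BB a g = e) := by
        ext a; simp [BB, h, eq_div_iff hg2]
      rw [hset] at this; linarith
    have hg2 : g.2 ≠ 0 := by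
      intro h
      have := h2 (e / g.1)
      have hset : univ.filter (fun a : ZMod p × ZMod p => a.2 = e / g.1) =
          univ.filter (fun a => BB a g = e) := by
        ext a; simp [BB, h, eq_div_iff hg1, mul_comm]
      rw [hset] at this; linarith
    have hp2 : p ≠ 2 := by
      intro hp
      subst hp
      have e1 := zmod2_ne
      have := h3 rfl e
      have hset : univ.filter (fun a : ZMod 2 × ZMod 2 => a.1 + a.2 = e) =
          univ.filter (fun a => BB a g = e) := by
        ext a; simp [BB, e1 _ hg1, e1 _ hg2]
      rw [hset] at this; linarith
    have h20 : (2 : ZMod p) ≠ 0 := by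
      intro h
      have : ((2 : ℕ) : ZMod p) = 0 := by exact_mod_cast h
      rw [ZMod.natCast_eq_zero_iff] at this
      exact hp2 ((Nat.prime_dvd_prime_iff_eq Fact.out Nat.prime_two).1 this)
    set L := univ.filter (fun a : ZMod p × ZMod p => BB a g = e) with hL
    have hpar : ∀ a ∈ L, ∀ a' ∈ L, a ≠ a' → ∃ l : ZMod p, l ≠ 0 ∧ a - a' = (l * g.1, - (l * g.2)) := by
      intro a ha a' ha' hne
      simp only [hL, mem_filter, mem_univ, true_and] at ha ha'
      have h0 : BB (a - a') g = 0 := by rw [BB_sub_left, ha, ha', sub_self]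
      simp only [BB, Prod.fst_sub, Prod.snd_sub] at h0
      have hsnd : a.2 - a'.2 = - ((a.1 - a'.1) / g.1 * g.2) := by
        field_simp; linear_combination h0
      refine ⟨(a.1 - a'.1) / g.1, ?_, ?_⟩
      · intro h
        apply hne
        have h5 : a.1 - a'.1 = 0 := by
          rcases div_eq_zero_iff.1 h with h | h
          · exact h
          · exact absurd h hg1
        rw [h5] at hsnd
        simp at hsnd
        exact Prod.ext (sub_eq_zero.1 h5) (sub_eq_zero.1 hsnd)
      · ext
        · simp; field_simp
        · simpa using hsnd
    have hB : ∀ a ∈ L, ∀ a' ∈ L, a ≠ a' → ∀ b ∈ L, ∀ b' ∈ L, b ≠ b' → BB (a - a') (b - b') ≠ 0 := by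
      intro a ha a' ha' hne b hb b' hb' hne'
      obtain ⟨l, hl, h4⟩ := hpar a ha a' ha' hne
      obtain ⟨k, hk, h5⟩ := hpar b hb b' hb' hne'
      rw [h4, h5]
      have : BB (l * g.1, - (l * g.2)) (k * g.1, - (k * g.2)) = - (2 * l * k * g.1 * g.2) := by
        simp [BB]; ring
      rw [this]
      simp [h20, hl, hk, hg1, hg2]
    have hmass : ∑ b ∈ L, ∑ b' ∈ L.filter (fun b' => b' ≠ b), ν b * ν b' ≥ 1 / 32 := by
      have h4 : ∀ b ∈ L, ∑ b' ∈ L.filter (fun b' => b' ≠ b), ν b' ≥ 1 / 16 := by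
        intro b hb
        have h6 := Finset.sum_filter_add_sum_filter_not L (fun b' => b' = b) ν
        rw [Finset.filter_eq', if_pos hb, Finset.sum_singleton] at h6
        have := hpt b
        linarith
      calc (1 : ℝ) / 32 ≤ (∑ b ∈ L, ν b) * (1 / 16) := by linarith
        _ ≤ _ := by
          rw [Finset.sum_mul]
          refine Finset.sum_le_sum fun b hb => ?_
          rw [← Finset.mul_sum]
          exact mul_le_mul_of_nonneg_left (h4 b hb) (hν b)
    have hdl : ∀ b ∈ L, ∀ b' ∈ L.filter (fun b' => b' ≠ b), 1 / 32 ≤ dl ν (b - b') := by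
      intro b hb b' hb'
      rw [mem_filter] at hb'
      refine hmass.le.trans ?_
      rw [dl]
      refine (Finset.sum_le_sum (g := fun a => ∑ a', ν a * ν a' *
        (if BB (a - a') (b - b') = 0 then (0 : ℝ) else 1)) fun a ha => ?_).trans
        (Finset.sum_le_univ_sum_of_nonneg fun a => Finset.sum_nonneg fun a' _ =>
          mul_nonneg (hnn a a') (by split_ifs <;> simp))
      refine (Finset.sum_le_sum (g := fun a' => ν a * ν a' *
        (if BB (a - a') (b - b') = 0 then (0 : ℝ) else 1)) fun a' ha' => ?_).trans
        (Finset.sum_le_univ_sum_of_nonneg fun a' => mul_nonneg (hnn a a') (by split_ifs <;> simp))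
      rw [mem_filter] at ha'
      rw [if_neg (hB a ha a' ha'.1 (fun q => ha'.2 q.symm) b hb b' hb'.1 (fun q => hb'.2 q.symm)), mul_one]
    calc τ / 128 ≤ 1 / 32 * (1 / 32) := by linarith
      _ ≤ (∑ b ∈ L, ∑ b' ∈ L.filter (fun b' => b' ≠ b), ν b * ν b') * (1 / 32) := by
        linarith
      _ ≤ ∑ b ∈ L, ∑ b' ∈ L.filter (fun b' => b' ≠ b), ν b * ν b' * dl ν (b - b') := by
        rw [Finset.sum_mul]
        refine Finset.sum_le_sum fun b hb => ?_
        rw [Finset.sum_mul]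
        exact Finset.sum_le_sum fun b' hb' => mul_le_mul_of_nonneg_left (hdl b hb b' hb') (hnn b b')
      _ ≤ _ := by
        refine (Finset.sum_le_sum (g := fun b => ∑ b', ν b * ν b' * dl ν (b - b')) fun b hb => ?_).trans
          (Finset.sum_le_univ_sum_of_nonneg fun b => Finset.sum_nonneg fun b' _ =>
            mul_nonneg (hnn b b') (dl_nonneg ν hν _))
        exact Finset.sum_le_univ_sum_of_nonneg fun b' => mul_nonneg (hnn b b') (dl_nonneg ν hν _)

lemma Q_boundB (ν : ZMod p × ZMod p → ℝ) (hν : ∀ a, 0 ≤ ν a) (hs : ∑ a, ν a = 1) (τ : ℝ)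
    (hτ0 : 0 ≤ τ) (hτ : τ ≤ 1 / 16) (hpt : ∀ a, ν a ≤ 7 / 8)
    (h1 : ∀ c, ∑ a ∈ univ.filter (fun a : ZMod p × ZMod p => a.1 = c), ν a ≤ 1 - τ)
    (h2 : ∀ c, ∑ a ∈ univ.filter (fun a : ZMod p × ZMod p => a.2 = c), ν a ≤ 1 - τ)
    (h3 : p = 2 → ∀ c, ∑ a ∈ univ.filter (fun a : ZMod p × ZMod p => a.1 + a.2 = c), ν a ≤ 1 - τ)
    (u : ZMod p × ZMod p → ℂ) (hu : ∀ a, ‖u a‖ = 1) :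
    ‖∑ a, ∑ b, CC a b * ((ν a : ℂ) * u a) * ((ν b : ℂ) * u b)‖ ≤
      Real.exp (-(τ / (64 * (p : ℝ) ^ 2))) := by
  have hp : 0 < (p : ℝ) := by exact_mod_cast (Fact.out : p.Prime).pos
  have h4 := stab ν hν hs τ hτ0 hτ hpt h1 h2 h3
  have h5 := Q_le_E ν hν hs u hu
  have h6 : ∑ b, ∑ b', ν b * ν b' * ‖Phi ν (b - b')‖ ^ 2 ≤
      1 - 8 / (p : ℝ) ^ 2 * ∑ b, ∑ b', ν b * ν b' * dl ν (b - b') := by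
    have h1 : (1 : ℝ) = ∑ a, ∑ a', ν a * ν a' := by
      simp only [← Finset.mul_sum, hs, mul_one]
    rw [h1, Finset.mul_sum, ← Finset.sum_sub_distrib]
    refine Finset.sum_le_sum fun a _ => ?_
    rw [Finset.mul_sum, ← Finset.sum_sub_distrib]
    refine Finset.sum_le_sum fun a' _ => ?_
    have := mul_le_mul_of_nonneg_left (Phi_le ν hν hs (a - a')) (mul_nonneg (hν a) (hν a'))
    linarith
  have h7 : 8 / (p : ℝ) ^ 2 * (τ / 128) ≤ 8 / (p : ℝ) ^ 2 * ∑ b, ∑ b', ν b * ν b' * dl ν (b - b') :=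
    mul_le_mul_of_nonneg_left h4 (by positivity)
  have h8 : 8 / (p : ℝ) ^ 2 * (τ / 128) = 4 * (τ / (64 * (p : ℝ) ^ 2)) := by field_simp; ring
  have h9 := Real.add_one_le_exp (-(4 * (τ / (64 * (p : ℝ) ^ 2))))
  have h10 : Real.exp (-(4 * (τ / (64 * (p : ℝ) ^ 2)))) = Real.exp (-(τ / (64 * (p : ℝ) ^ 2))) ^ 4 := by
    rw [← Real.exp_nat_mul]; congr 1; push_cast; ring
  refine le_of_pow_le_pow_left₀ (n := 4) (by norm_num) (Real.exp_pos _).le ?_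
  rw [← h10]
  linarith

end
end UCNV

namespace UCNV
set_option linter.unusedSectionVars false

lemma fact_upper (m : ℕ) (hm : 1 ≤ m) :
    (m.factorial : ℝ) ≤ Real.exp 1 * m * (m / Real.exp 1) ^ m := by
  induction m, hm using Nat.le_induction with
  | base =>
    have := Real.exp_pos 1
    simp
  | succ m hm ih =>
    have he := Real.exp_pos 1
    have hm0 : (0 : ℝ) < m := by exact_mod_cast hm
    rw [Nat.factorial_succ]
    push_cast
    have key : (m : ℝ) * (m / Real.exp 1) ^ m ≤ (((m : ℝ) + 1) / Real.exp 1) ^ (m + 1) := by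
      have h1 : (m : ℝ) / (m + 1) ≤ Real.exp (-(1 / ((m : ℝ) + 1))) := by
        have := Real.add_one_le_exp (-(1 / ((m : ℝ) + 1)))
        refine le_trans (le_of_eq ?_) this
        field_simp; ring
      have h2 : ((m : ℝ) / (m + 1)) ^ (m + 1) ≤ Real.exp (-1) := by
        refine (pow_le_pow_left₀ (by positivity) h1 (m + 1)).trans (le_of_eq ?_)
        rw [← Real.exp_nat_mul]; congr 1; push_cast; field_simp
      have h3 : (m : ℝ) * (m / Real.exp 1) ^ m =
          ((m : ℝ) / (m + 1)) ^ (m + 1) * Real.exp 1 * (((m : ℝ) + 1) / Real.exp 1) ^ (m + 1) := by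
        rw [div_pow, div_pow, div_pow]; field_simp; ring
      have h4 : Real.exp (-1) * Real.exp 1 = 1 := by rw [← Real.exp_add]; simp
      rw [h3]
      have h5 : ((m : ℝ) / (m + 1)) ^ (m + 1) * Real.exp 1 ≤ 1 := by
        exact (mul_le_mul_of_nonneg_right h2 he.le).trans h4.le
      exact mul_le_of_le_one_left (by positivity) h5
    calc ((m : ℝ) + 1) * (m.factorial : ℝ)
        ≤ (m + 1) * (Real.exp 1 * m * (m / Real.exp 1) ^ m) := by gcongr
      _ = Real.exp 1 * (m + 1) * (m * (m / Real.exp 1) ^ m) := by ring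
      _ ≤ _ := by gcongr

lemma fact_upper' (m M : ℕ) (hmM : m ≤ M) (hM : 1 ≤ M) :
    (m.factorial : ℝ) ≤ Real.exp 1 * M * (m / Real.exp 1) ^ m := by
  rcases Nat.eq_zero_or_pos m with rfl | hm
  · have h1 : (1 : ℝ) ≤ M := by exact_mod_cast hM
    have h2 := Real.add_one_le_exp 1
    simp; nlinarith
  · refine (fact_upper m hm).trans ?_
    have : (m : ℝ) ≤ M := by exact_mod_cast hmM
    gcongr

lemma fact_lower (M : ℕ) : ((M : ℝ) / Real.exp 1) ^ M ≤ M.factorial := by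
  have := Real.pow_div_factorial_le_exp (x := M) (by positivity) M
  rw [div_pow, ← Real.exp_nat_mul, mul_one]
  rw [div_le_iff₀ (by positivity)] at this
  rw [div_le_iff₀ (by positivity)]
  linarith

section
variable {G : Type*} [Fintype G] [DecidableEq G] {n d : ℕ}

/-- empirical measure -/
noncomputable def nu (x : Fin n → G) (a : G) : ℝ := (cnt x a : ℝ) / n

/-- the type probability -/
noncomputable def PP (x : Fin n → G) : ℝ := ∏ i, nu x (x i)

lemma nu_nonneg (x : Fin n → G) (a : G) : 0 ≤ nu x a := by unfold nu; positivity

lemma nu_sum (hn : 0 < n) (x : Fin n → G) : ∑ a, nu x a = 1 := by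
  unfold nu
  rw [← Finset.sum_div, ← Nat.cast_sum, sum_cnt]
  have : (n : ℝ) ≠ 0 := by positivity
  simp [this]

lemma nu_pos (hn : 0 < n) (x : Fin n → G) (i : Fin n) : 0 < nu x (x i) := by
  unfold nu
  have : 0 < cnt x (x i) := Finset.card_pos.2 ⟨i, by simp⟩
  positivity

lemma PP_pos (hn : 0 < n) (x : Fin n → G) : 0 < PP x := Finset.prod_pos fun i _ => nu_pos hn x i

lemma cnt_ext (x : Fin n → G) (a : G) :
    cnt (fun h : Fin n × Fin d => x h.1) a = cnt x a * d := by
  unfold cnt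
  have : univ.filter (fun h : Fin n × Fin d => x h.1 = a) =
      (univ.filter (fun i => x i = a)) ×ˢ (univ : Finset (Fin d)) := by
    ext ⟨i, j⟩; simp
  rw [this, Finset.card_product]; simp

lemma fact_bound (hn : 0 < n) (hd : 0 < d) (x : Fin n → G) :
    ((∏ a, (cnt (fun h : Fin n × Fin d => x h.1) a).factorial : ℕ) : ℝ) ≤
      (Real.exp 1 * (n * d : ℕ)) ^ (Fintype.card G) * (n * d).factorial * PP x ^ d := by
  have hM : 1 ≤ n * d := Nat.mul_pos hn hd
  have hnR : (0 : ℝ) < n := by exact_mod_cast hn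
  have he := Real.exp_pos 1
  push_cast [cnt_ext]
  have h1 : ∏ a, ((cnt x a * d).factorial : ℝ) ≤ ∏ a, (Real.exp 1 * (n * d : ℕ) *
      (((n * d : ℕ) / Real.exp 1) ^ (cnt x a * d) * (nu x a ^ cnt x a) ^ d)) := by
    refine Finset.prod_le_prod (fun _ _ => by positivity) fun a _ => ?_
    have h2 : cnt x a ≤ n := by simpa using cnt_le x a
    refine (fact_upper' (cnt x a * d) (n * d) (Nat.mul_le_mul_right d h2) hM).trans (le_of_eq ?_)
    congr 1
    rw [← pow_mul, ← mul_pow]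
    congr 1
    unfold nu
    push_cast
    field_simp
  refine h1.trans ?_
  rw [Finset.prod_mul_distrib, Finset.prod_const, Finset.card_univ, mul_assoc, Finset.prod_mul_distrib,
    Finset.prod_pow, Finset.prod_pow_eq_pow_sum, ← Finset.sum_mul, sum_cnt,
    ← prod_comp_cnt x (fun a => nu x a)]
  simp only [Fintype.card_fin]
  push_cast
  have h5 := fact_lower (n * d)
  push_cast at h5
  have h6 : 0 ≤ PP x ^ d := pow_nonneg (PP_pos hn x).le d
  have h7 : 0 ≤ (Real.exp 1 * ((n : ℝ) * d)) ^ Fintype.card G := by positivity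
  exact mul_le_mul_of_nonneg_left (mul_le_mul_of_nonneg_right h5 h6) h7

lemma sum_PP (hn : 0 < n) : ∑ x : Fin n → G, PP x ≤ ((n + 1 : ℕ) : ℝ) ^ (Fintype.card G) := by
  let ty : (Fin n → G) → (G → Fin (n + 1)) := fun x a =>
    ⟨cnt x a, Nat.lt_succ_of_le (by simpa using cnt_le x a)⟩
  rw [← Finset.sum_fiberwise univ ty]
  have : ∀ c : G → Fin (n + 1), ∑ x ∈ univ.filter (fun x => ty x = c), PP x ≤ 1 := by
    intro c
    by_cases h : ∃ x, ty x = c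
    · obtain ⟨x0, hx0⟩ := h
      have h1 : ∀ x ∈ univ.filter (fun x => ty x = c), PP x = ∏ i, nu x0 (x i) := by
        intro x hx
        simp only [mem_filter, mem_univ, true_and] at hx
        have h2 : cnt x = cnt x0 := by
          funext a
          have := congrFun (hx.trans hx0.symm) a
          exact congrArg Fin.val this
        unfold PP nu
        rw [h2]
      rw [Finset.sum_congr rfl h1]
      refine (Finset.sum_le_univ_sum_of_nonneg fun x => Finset.prod_nonneg fun i _ =>
        nu_nonneg _ _).trans ?_
      have h3 := Fintype.sum_pow (fun a => nu x0 a) n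
      rw [nu_sum hn, one_pow] at h3
      rw [← h3]
    · rw [Finset.filter_false_of_mem]
      · simp
      · intro x _ hx; exact h ⟨x, hx⟩
  refine (Finset.sum_le_sum fun c _ => this c).trans ?_
  simp

end

section
variable {p n d m : ℕ} [Fact p.Prime]

/-- normalised sum over bijections -/
noncomputable def Wf (n d m : ℕ) (x : Fin n → ZMod p × ZMod p) : ℝ :=
  ‖∑ e : Fin m × Bool ≃ Fin n × Fin d, ∏ j : Fin m,
    CC (x (e (j, true)).1) (x (e (j, false)).1)‖ / (n * d).factorial

lemma Wf_cauchy (hn : 0 < n) (hd : 0 < d) (hm : n * d = 2 * m) (x : Fin n → ZMod p × ZMod p)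
    (r : ZMod p × ZMod p → ℝ) (Q : ℝ)
    (hQ : ∀ u : ZMod p × ZMod p → ℂ, (∀ a, ‖u a‖ = 1) →
      ‖∑ a, ∑ b, CC a b * ((r a : ℂ) * u a) * ((r b : ℂ) * u b)‖ ≤ Q)
    (hr : ∀ a, 0 ≤ r a) :
    Wf n d m x * (∏ i, r (x i)) ^ d ≤ (Real.exp 1 * (n * d : ℕ)) ^ (p ^ 2) * PP x ^ d * Q ^ m := by
  have hQ0 : 0 ≤ Q := (norm_nonneg _).trans (hQ (fun _ => 1) (by simp))
  have h1 := cauchy_bound (H := Fin n × Fin d) (m := m) (by simp [hm]) (fun h => x h.1)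
    CC r Q hQ hr
  have h2 : ∏ h : Fin n × Fin d, r (x h.1) = (∏ i, r (x i)) ^ d := by
    rw [Fintype.prod_prod_type]
    simp [Finset.prod_pow]
  rw [h2] at h1
  have h3 := fact_bound hn hd x
  rw [show Fintype.card (ZMod p × ZMod p) = p ^ 2 by simp [ZMod.card, pow_two]] at h3
  have h4 : (0 : ℝ) < (n * d).factorial := by positivity
  unfold Wf
  rw [div_mul_eq_mul_div, div_le_iff₀ h4]
  refine h1.trans ((mul_le_mul_of_nonneg_right h3 (pow_nonneg hQ0 m)).trans (le_of_eq (by ring)))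

lemma Wf_A (hn : 0 < n) (hd : 0 < d) (hm : n * d = 2 * m) (x : Fin n → ZMod p × ZMod p) :
    Wf n d m x ≤ (Real.exp 1 * (n * d : ℕ)) ^ (p ^ 2) * √((p : ℝ) ^ n * PP x) ^ d := by
  have h := Wf_cauchy hn hd hm x (fun a => √(nu x a)) p (by
    intro u hu
    have := Q_boundA (fun a => ((√(nu x a) : ℝ) : ℂ) * u a) (by
      simp only [norm_mul, hu, mul_one, Complex.norm_real, Real.norm_eq_abs, sq_abs]
      simp only [Real.sq_sqrt (nu_nonneg x _), nu_sum hn x, le_refl])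
    exact this) (fun a => Real.sqrt_nonneg _)
  have hP := PP_pos hn x
  have h1 : ∏ i, √(nu x (x i)) = √(PP x) := by
    rw [PP, Real.sqrt_prod _ (fun i _ => nu_nonneg x _)]
  rw [h1] at h
  have h2 : PP x ^ d = √(PP x) ^ d * √(PP x) ^ d := by
    rw [← mul_pow, Real.mul_self_sqrt hP.le]
  have h3 : (p : ℝ) ^ m = √((p : ℝ) ^ n) ^ d := by
    have hp0 : (0 : ℝ) ≤ p := by positivity
    have : (√((p : ℝ) ^ n) ^ d) ^ 2 = ((p : ℝ) ^ m) ^ 2 := by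
      rw [← pow_mul, mul_comm d 2, pow_mul, Real.sq_sqrt (by positivity), ← pow_mul, ← pow_mul, hm,
        mul_comm]
    exact ((pow_left_inj₀ (by positivity) (by positivity) (by norm_num)).1 this).symm
  have h4 : 0 < √(PP x) ^ d := pow_pos (Real.sqrt_pos.2 hP) d
  refine le_of_mul_le_mul_right (h.trans (le_of_eq ?_)) h4
  rw [Real.sqrt_mul (by positivity), h2, h3]; ring

lemma Wf_B (hn : 0 < n) (hd : 0 < d) (hm : n * d = 2 * m) (x : Fin n → ZMod p × ZMod p)
    (Q : ℝ) (hQ : ∀ u : ZMod p × ZMod p → ℂ, (∀ a, ‖u a‖ = 1) →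
      ‖∑ a, ∑ b, CC a b * ((nu x a : ℂ) * u a) * ((nu x b : ℂ) * u b)‖ ≤ Q) :
    Wf n d m x ≤ (Real.exp 1 * (n * d : ℕ)) ^ (p ^ 2) * Q ^ m := by
  have h := Wf_cauchy hn hd hm x (nu x) Q hQ (nu_nonneg x)
  have hP := PP_pos hn x
  change Wf n d m x * (PP x) ^ d ≤ _ at h
  refine le_of_mul_le_mul_right (h.trans (le_of_eq ?_)) (pow_pos hP d)
  ring

lemma nu_level (hn : 0 < n) (x : Fin n → ZMod p × ZMod p) (f : ZMod p × ZMod p → ZMod p)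
    (c : ZMod p) (K : ℝ) (hK : K ≤ (univ.filter (fun i => f (x i) ≠ c)).card) :
    ∑ a ∈ univ.filter (fun a => f a = c), nu x a ≤ 1 - K / n := by
  have hnR : (0 : ℝ) < n := by exact_mod_cast hn
  have h1 : ∑ a ∈ univ.filter (fun a => f a = c), nu x a =
      ((univ.filter (fun i => f (x i) = c)).card : ℝ) / n := by
    unfold nu
    rw [← Finset.sum_div, Finset.sum_filter, Finset.card_filter]
    push_cast
    rw [sum_comp_cnt (R := ℝ) x (fun a => if f a = c then 1 else 0)]
    simp
  have h2 : (univ.filter (fun i => f (x i) = c)).card + (univ.filter (fun i => f (x i) ≠ c)).card = n := by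
    have := Finset.card_filter_add_card_filter_not (s := (univ : Finset (Fin n))) (fun i => f (x i) = c)
    simpa using this
  have h3 : ((univ.filter (fun i => f (x i) = c)).card : ℝ) +
    (univ.filter (fun i => f (x i) ≠ c)).card = n := by exact_mod_cast h2
  rw [h1, div_le_iff₀ hnR, sub_mul, div_mul_cancel₀ _ hnR.ne']
  linarith

lemma R_point (hn : 0 < n) (hd : 3 ≤ d) (hm : n * d = 2 * m) (x : Fin n → ZMod p × ZMod p) (K : ℝ)
    (hK0 : 0 ≤ K) (hK : 16 * K ≤ n)
    (hpt : ∀ a, (n : ℝ) ≤ 8 * (univ.filter (fun i => x i ≠ a)).card)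
    (h1 : ∀ c, K ≤ (univ.filter (fun i => (x i).1 ≠ c)).card)
    (h2 : ∀ c, K ≤ (univ.filter (fun i => (x i).2 ≠ c)).card)
    (h3 : p = 2 → ∀ c, K ≤ (univ.filter (fun i => (x i).1 + (x i).2 ≠ c)).card) :
    ((p : ℝ) ^ n)⁻¹ * Wf n d m x ≤ (Real.exp 1 * (n * d : ℕ)) ^ (p ^ 2) * PP x *
      (2 * Real.exp (-(K / (192 * (p : ℝ) ^ 2)))) := by
  have hnR : (0 : ℝ) < n := by exact_mod_cast hn
  have hpR : (0 : ℝ) < p := by exact_mod_cast (Fact.out : p.Prime).pos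
  have hP := PP_pos hn x
  set L := (Real.exp 1 * (n * d : ℕ)) ^ (p ^ 2) with hL
  have hL0 : 0 ≤ L := by positivity
  set s := K / (192 * (p : ℝ) ^ 2) with hs
  have hs0 : 0 ≤ s := by positivity
  have hpn : 0 < (p : ℝ) ^ n := by positivity
  by_cases hc : (p : ℝ) ^ n * PP x ≤ Real.exp (-s) ^ 2
  · have hA := Wf_A hn (by omega) hm x
    set Z := √((p : ℝ) ^ n * PP x) with hZ
    have hZ0 : 0 ≤ Z := Real.sqrt_nonneg _
    have hZ1 : Z ≤ Real.exp (-s) := Real.sqrt_le_iff.2 ⟨(Real.exp_pos _).le, hc⟩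
    have hZ2 : Z ≤ 1 := hZ1.trans (Real.exp_le_one_iff.2 (by linarith))
    have hZd : Z ^ d ≤ Z ^ 3 := pow_le_pow_of_le_one hZ0 hZ2 hd
    have hZs : Z ^ 2 = (p : ℝ) ^ n * PP x := Real.sq_sqrt (by positivity)
    have hZ3 : Z ^ 3 ≤ (p : ℝ) ^ n * PP x * Real.exp (-s) := by
      rw [pow_succ, hZs]; gcongr
    rw [inv_mul_le_iff₀ hpn]
    calc Wf n d m x ≤ L * Z ^ d := hA
      _ ≤ L * ((p : ℝ) ^ n * PP x * Real.exp (-s)) := by gcongr; exact hZd.trans hZ3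
      _ ≤ (p : ℝ) ^ n * (L * PP x * (2 * Real.exp (-s))) := by
        have : 0 ≤ L * ((p : ℝ) ^ n * PP x * Real.exp (-s)) := by positivity
        linarith
  · push Not at hc
    have hB := Wf_B hn (by omega) hm x (Real.exp (-(K / n / (64 * (p : ℝ) ^ 2)))) (by
      refine Q_boundB (nu x) (nu_nonneg x) (nu_sum hn x) (K / n) (by positivity) ?_ ?_
        (fun c => nu_level hn x Prod.fst c K (h1 c)) (fun c => nu_level hn x Prod.snd c K (h2 c))
        (fun hp c => nu_level hn x (fun a => a.1 + a.2) c K (h3 hp c))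
      · rw [div_le_iff₀ hnR]; linarith
      · intro a
        have h4 := hpt a
        have h5 : cnt x a + (univ.filter (fun i => x i ≠ a)).card = n := by
          have := Finset.card_filter_add_card_filter_not (s := (univ : Finset (Fin n))) (fun i => x i = a)
          simpa [cnt] using this
        have h6 : (cnt x a : ℝ) + (univ.filter (fun i => x i ≠ a)).card = n := by exact_mod_cast h5
        unfold nu
        rw [div_le_iff₀ hnR]; linarith)
    have hQ : Real.exp (-(K / n / (64 * (p : ℝ) ^ 2))) ^ m ≤ Real.exp (-s) ^ 3 := by
      rw [← Real.exp_nat_mul, ← Real.exp_nat_mul, Real.exp_le_exp]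
      have hmn : (n : ℝ) ≤ m := by
        have : n ≤ m := by nlinarith
        exact_mod_cast this
      have h7 : K / n / (64 * (p : ℝ) ^ 2) * n ≤ K / n / (64 * (p : ℝ) ^ 2) * m := by gcongr
      have h8 : K / n / (64 * (p : ℝ) ^ 2) * n = 3 * s := by
        rw [hs]; field_simp; ring
      push_cast
      linarith
    have he := Real.exp_pos (-s)
    rw [inv_mul_le_iff₀ hpn]
    calc Wf n d m x ≤ L * Real.exp (-s) ^ 3 := hB.trans (by gcongr)
      _ = L * Real.exp (-s) * Real.exp (-s) ^ 2 := by ring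
      _ ≤ L * Real.exp (-s) * ((p : ℝ) ^ n * PP x) := by gcongr
      _ ≤ (p : ℝ) ^ n * (L * PP x * (2 * Real.exp (-s))) := by
        have : 0 ≤ L * ((p : ℝ) ^ n * PP x * Real.exp (-s)) := by positivity
        linarith

end
end UCNV

namespace UCNV
set_option linter.unusedSectionVars false

section
variable {p n d m : ℕ} [Fact p.Prime]

/-- the image vector -/
def Av (σ : Equiv.Perm (Fin n × Fin d)) (v : Fin n → ZMod p) (l : Fin n) : ZMod p :=
  ∑ i, v (σ (l, i)).1

/-- the pairing -/
def pr (σ : Equiv.Perm (Fin n × Fin d)) (t v : Fin n → ZMod p) : ZMod p :=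
  ∑ l, t l * Av σ v l

lemma pr_eq (σ : Equiv.Perm (Fin n × Fin d)) (t v : Fin n → ZMod p) :
    pr σ t v = ∑ h : Fin n × Fin d, t h.1 * v (σ h).1 := by
  rw [Fintype.sum_prod_type]
  simp only [pr, Av, Finset.mul_sum]

lemma pr_symm (σ : Equiv.Perm (Fin n × Fin d)) (hσ : σ ∈ Mt (Fin n × Fin d))
    (t v : Fin n → ZMod p) : pr σ t v = pr σ v t := by
  rw [mem_Mt] at hσ
  rw [pr_eq, pr_eq]
  refine Fintype.sum_equiv σ _ _ fun h => ?_
  rw [hσ.1, mul_comm]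

lemma pr_add (σ : Equiv.Perm (Fin n × Fin d)) (t s v : Fin n → ZMod p) :
    pr σ (t + s) v = pr σ t v + pr σ s v := by
  simp only [pr, Pi.add_apply, add_mul, Finset.sum_add_distrib]

lemma pr_self (hp : p = 2) (σ : Equiv.Perm (Fin n × Fin d)) (hσ : σ ∈ Mt (Fin n × Fin d))
    (v : Fin n → ZMod p) : pr σ v v = 0 := by
  subst hp
  rw [mem_Mt] at hσ
  rw [pr_eq]
  refine Finset.sum_involution (fun h _ => σ h) ?_ ?_ ?_ ?_
  · intro h _
    rw [hσ.1, mul_comm (v (σ h).1)]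
    exact CharTwo.add_self_eq_zero _
  · intro h _ _; exact hσ.2 h
  · intro h _; simp
  · intro h _; exact hσ.1 h

/-- unnormalised character sum -/
noncomputable def Wc (d : ℕ) (t v : Fin n → ZMod p) : ℂ :=
  ∑ σ ∈ Mt (Fin n × Fin d), (ZMod.stdAddChar (pr σ t v) : ℂ)

lemma Wc_le (t v : Fin n → ZMod p) : ‖Wc d t v‖ ≤ (Mt (Fin n × Fin d)).card := by
  refine (norm_sum_le _ _).trans ?_
  simp [norm_stdAddChar]

lemma Wc_symm (t v : Fin n → ZMod p) : Wc d t v = Wc d v t := by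
  refine Finset.sum_congr rfl fun σ hσ => by rw [pr_symm σ hσ]

lemma Wc_two (hp : p = 2) (s v : Fin n → ZMod p) : Wc d (v + s) v = Wc d s v := by
  refine Finset.sum_congr rfl fun σ hσ => by rw [pr_add, pr_self hp σ hσ, zero_add]

lemma Wc_norm (hm : n * d = 2 * m) (t v : Fin n → ZMod p) :
    ‖Wc d t v‖ = (Mt (Fin n × Fin d)).card * Wf n d m (fun i => (t i, v i)) := by
  have hH : Fintype.card (Fin n × Fin d) = 2 * m := by simp [hm]
  have h1 := sum_sig hH (fun σ => (ZMod.stdAddChar (pr σ t v) : ℂ))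
  have h2 : ∀ e : Fin m × Bool ≃ Fin n × Fin d, (ZMod.stdAddChar (pr (sig e) t v) : ℂ) =
      ∏ j : Fin m, CC ((fun i => (t i, v i)) (e (j, true)).1) ((fun i => (t i, v i)) (e (j, false)).1) := by
    intro e
    rw [pr_eq, ← Equiv.sum_comp e, Fintype.sum_prod_type, addChar_sum]
    refine Finset.prod_congr rfl fun j _ => ?_
    rw [CC]
    congr 1
    simp [sig_apply, BB]
  have h3 := card_Mt hH
  simp_rw [h2] at h1
  unfold Wf
  rw [h1, norm_mul, Complex.norm_natCast, hm, ← h3]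
  change ‖Wc d t v‖ = _ * (_ * ‖Wc d t v‖ / _)
  have h4 : ((Mt (Fin n × Fin d)).card : ℝ) ≠ 0 := by
    have := Mt_card_pos hH
    positivity
  push_cast
  have h5 : ((m.factorial : ℕ) : ℝ) ≠ 0 := by positivity
  field_simp

/-- number of matchings killing `v` -/
def NN (d : ℕ) (v : Fin n → ZMod p) : ℕ :=
  ((Mt (Fin n × Fin d)).filter (fun σ => ∀ l, Av σ v l = 0)).card

lemma sum_Wc (v : Fin n → ZMod p) : ∑ t, Wc d t v = (p : ℂ) ^ n * NN d v := by
  unfold Wc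
  rw [Finset.sum_comm, NN, Finset.card_filter]
  push_cast
  rw [Finset.mul_sum]
  refine Finset.sum_congr rfl fun σ _ => ?_
  let χ : AddChar (Fin n → ZMod p) ℂ :=
    { toFun := fun t => ZMod.stdAddChar (pr σ t v)
      map_zero_eq_one' := by simp [pr]
      map_add_eq_mul' := by
        intro a b
        rw [← AddChar.map_add_eq_mul, pr_add] }
  have h := AddChar.sum_eq_ite χ
  change ∑ t, (ZMod.stdAddChar (pr σ t v) : ℂ) = _ at h
  rw [h]
  have hiff : χ = 0 ↔ ∀ l, Av σ v l = 0 := by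
    constructor
    · intro h0 l
      have h1 : χ (Pi.single l 1) = 1 := by rw [h0]; rfl
      change (ZMod.stdAddChar (pr σ (Pi.single l 1) v) : ℂ) = 1 at h1
      rw [← AddChar.map_zero_eq_one (ZMod.stdAddChar (N := p))] at h1
      have h2 := ZMod.injective_stdAddChar h1
      simpa [pr, Pi.single_apply] using h2
    · intro h0
      ext t
      change (ZMod.stdAddChar (pr σ t v) : ℂ) = 1
      simp [pr, h0]
  by_cases hc : ∀ l, Av σ v l = 0
  · rw [if_pos (hiff.2 hc), if_pos hc]; simp [ZMod.card]
  · rw [if_neg (fun q => hc (hiff.1 q)), if_neg hc]; simp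

/-- near-constancy -/
def NC (K : ℕ) (v : Fin n → ZMod p) : Prop := ∃ c, (univ.filter (fun k => v k ≠ c)).card ≤ K

/-- sparse sum -/
noncomputable def SP (p n d K : ℕ) [Fact p.Prime] : ℕ :=
  ∑ v ∈ univ.filter (fun v : Fin n → ZMod p => v ≠ 0 ∧ (univ.filter (fun k => v k ≠ 0)).card ≤ K), NN d v

lemma NN_zero : NN d (0 : Fin n → ZMod p) = (Mt (Fin n × Fin d)).card := by
  unfold NN
  rw [Finset.filter_true_of_mem]
  intro σ _ l; simp [Av]

lemma NN_const (hpd : Nat.gcd p d = 1) (K : ℕ) (hK : K * d < n) (v : Fin n → ZMod p) (c : ZMod p)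
    (hc : c ≠ 0) (hv : (univ.filter (fun k => v k ≠ c)).card ≤ K) : NN d v = 0 := by
  unfold NN
  rw [Finset.card_eq_zero, Finset.filter_eq_empty_iff]
  intro σ hσ h0
  rw [mem_Mt] at hσ
  -- the set of bad half-edges
  set T := (univ.filter (fun k => v k ≠ c)) ×ˢ (univ : Finset (Fin d)) with hT
  set U := T.image (fun h => (σ h).1) with hU
  have hUc : U.card < n := by
    refine lt_of_le_of_lt Finset.card_image_le ?_
    rw [hT, Finset.card_product, Finset.card_univ, Fintype.card_fin]
    exact lt_of_le_of_lt (Nat.mul_le_mul_right d hv) hK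
  obtain ⟨l, hl⟩ : ∃ l, l ∉ U := by
    by_contra hcon
    push Not at hcon
    have : U = univ := by ext l; simp [hcon l]
    rw [this] at hUc
    simp at hUc
  have h1 : ∀ i, v (σ (l, i)).1 = c := by
    intro i
    by_contra hne
    apply hl
    rw [hU, Finset.mem_image]
    refine ⟨σ (l, i), ?_, by rw [hσ.1]⟩
    rw [hT, Finset.mem_product]
    simp [hne]
  have h2 := h0 l
  simp only [Av, h1, Finset.sum_const, Finset.card_univ, Fintype.card_fin, nsmul_eq_mul, mul_eq_zero, hc,
    or_false] at h2
  rw [ZMod.natCast_eq_zero_iff] at h2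
  have h3 : p ∣ Nat.gcd p d := Nat.dvd_gcd dvd_rfl h2
  rw [hpd] at h3
  exact (Fact.out : p.Prime).one_lt.ne' (Nat.dvd_one.1 h3)

open Classical in
lemma sum_NC (hpd : Nat.gcd p d = 1) (K : ℕ) (hK : K * d < n) :
    ∑ v ∈ univ.filter (fun v : Fin n → ZMod p => NC K v), NN d v =
      (Mt (Fin n × Fin d)).card + SP p n d K := by
  have h1 : ∑ v ∈ univ.filter (fun v : Fin n → ZMod p => NC K v), NN d v =
      ∑ v ∈ univ.filter (fun v : Fin n → ZMod p => (univ.filter (fun k => v k ≠ 0)).card ≤ K), NN d v := by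
    symm
    refine Finset.sum_subset ?_ ?_
    · intro v hv
      simp only [mem_filter, mem_univ, true_and] at hv ⊢
      exact ⟨0, hv⟩
    · intro v hv hv'
      simp only [mem_filter, mem_univ, true_and] at hv hv'
      obtain ⟨c, hc⟩ := hv
      refine NN_const hpd K hK v c ?_ hc
      rintro rfl
      exact hv' hc
  rw [h1, SP, ← NN_zero (p := p)]
  have h2 : univ.filter (fun v : Fin n → ZMod p => (univ.filter (fun k => v k ≠ 0)).card ≤ K) =
      insert 0 (univ.filter (fun v : Fin n → ZMod p =>
        v ≠ 0 ∧ (univ.filter (fun k => v k ≠ 0)).card ≤ K)) := by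
    ext v
    simp only [mem_filter, mem_univ, true_and, mem_insert]
    by_cases hv : v = 0
    · subst hv; simp
    · simp [hv]
  rw [h2, Finset.sum_insert (by simp)]

end
end UCNV

namespace UCNV
set_option linter.unusedSectionVars false

lemma arith_aux (M D b S A L E Z P : ℝ) (hM : 0 < M) (hP : 0 < P) (hb0 : 0 ≤ b) (hb1 : b ≤ 1)
    (hS : 0 ≤ S)
    (h : P * |(M + D) - (2 + b) * (M + S)| ≤ M * (P * (L * A * E)) + 2 * M * Z) :
    |D / M - (1 + b)| ≤ 3 * (S / M) + A * L * E + 2 * (Z / P) := by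
  have h8 : |(M + D) - (2 + b) * (M + S)| ≤ M * (L * A * E) + 2 * M * (Z / P) := by
    refine le_of_mul_le_mul_left (h.trans (le_of_eq ?_)) hP
    field_simp
  have h9 : D / M - (1 + b) = ((M + D) - (2 + b) * (M + S)) / M + (2 + b) * (S / M) := by
    field_simp; ring
  rw [h9]
  refine (abs_add_le _ _).trans ?_
  rw [abs_div, abs_of_pos hM, abs_of_nonneg (a := (2 + b) * (S / M)) (by positivity)]
  have h10 : |(M + D) - (2 + b) * (M + S)| / M ≤ L * A * E + 2 * (Z / P) := by
    rw [div_le_iff₀ hM]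
    refine h8.trans (le_of_eq (by ring))
  have h11 : (2 + b) * (S / M) ≤ 3 * (S / M) := by
    apply mul_le_mul_of_nonneg_right _ (by positivity)
    linarith
  have h12 : L * A * E = A * L * E := by ring
  linarith

section
variable {p n d m : ℕ} [Fact p.Prime]

/-- essentially concentrated at a point -/
def PTp (t v : Fin n → ZMod p) : Prop :=
  ∃ a : ZMod p × ZMod p, 8 * (univ.filter (fun i => ((t i, v i) : ZMod p × ZMod p) ≠ a)).card < n

lemma PT_aux (K : ℕ) (hK : 16 * K < n) (t v : Fin n → ZMod p) (A B : Fin n → Prop)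
    [DecidablePred A] [DecidablePred B] (a : ZMod p × ZMod p)
    (hA : (univ.filter A).card ≤ K) (hB : (univ.filter B).card ≤ K)
    (h : ∀ i, (t i, v i) ≠ a → A i ∨ B i) : PTp t v := by
  refine ⟨a, ?_⟩
  have h1 : univ.filter (fun i => ((t i, v i) : ZMod p × ZMod p) ≠ a) ⊆ univ.filter A ∪ univ.filter B := by
    intro i hi
    simp only [mem_filter, mem_univ, true_and, mem_union] at hi ⊢
    exact h i hi
  have h2 := Finset.card_le_card h1
  have h3 := Finset.card_union_le (univ.filter A) (univ.filter B)
  omega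

lemma PT12 (K : ℕ) (hK : 16 * K < n) (t v : Fin n → ZMod p) (h1 : NC K v) (h2 : NC K t) : PTp t v := by
  obtain ⟨c, hc⟩ := h1
  obtain ⟨e, he⟩ := h2
  refine PT_aux K hK t v _ _ (e, c) he hc ?_
  intro i hi
  by_contra hcon
  push Not at hcon
  exact hi (Prod.ext hcon.1 hcon.2)

lemma PT13 (K : ℕ) (hK : 16 * K < n) (t v : Fin n → ZMod p) (h1 : NC K v) (h2 : NC K (t + v)) :
    PTp t v := by
  obtain ⟨c, hc⟩ := h1
  obtain ⟨e, he⟩ := h2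
  refine PT_aux K hK t v _ _ (e - c, c) he hc ?_
  intro i hi
  by_contra hcon
  push Not at hcon
  refine hi (Prod.ext ?_ hcon.2)
  have := hcon.1
  simp only [Pi.add_apply] at this
  simp only
  rw [← this, ← hcon.2]; ring

lemma PT23 (K : ℕ) (hK : 16 * K < n) (t v : Fin n → ZMod p) (h1 : NC K t) (h2 : NC K (t + v)) :
    PTp t v := by
  obtain ⟨c, hc⟩ := h1
  obtain ⟨e, he⟩ := h2
  refine PT_aux K hK t v _ _ (c, e - c) he hc ?_
  intro i hi
  by_contra hcon
  push Not at hcon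
  refine hi (Prod.ext hcon.2 ?_)
  have := hcon.1
  simp only [Pi.add_apply] at this
  simp only
  rw [← this, ← hcon.2]; ring

open Classical in
lemma T2_eq (K : ℕ) :
    ∑ v : Fin n → ZMod p, ∑ t : Fin n → ZMod p, Wc d t v * (if NC K t then 1 else 0) =
      (p : ℂ) ^ n * (∑ v ∈ univ.filter (fun v : Fin n → ZMod p => NC K v), NN d v : ℕ) := by
  rw [Finset.sum_comm, Finset.sum_filter]
  push_cast
  rw [Finset.mul_sum]
  refine Finset.sum_congr rfl fun t _ => ?_
  rw [← Finset.sum_mul]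
  have : ∑ v, Wc d t v = (p : ℂ) ^ n * NN d t := by
    rw [← sum_Wc]; exact Finset.sum_congr rfl fun v _ => Wc_symm _ _
  rw [this]
  split_ifs <;> simp

open Classical in
lemma T1_eq (K : ℕ) :
    ∑ v : Fin n → ZMod p, ∑ t : Fin n → ZMod p, Wc d t v * (if NC K v then 1 else 0) =
      (p : ℂ) ^ n * (∑ v ∈ univ.filter (fun v : Fin n → ZMod p => NC K v), NN d v : ℕ) := by
  rw [← T2_eq, Finset.sum_comm]
  refine Finset.sum_congr rfl fun t _ => Finset.sum_congr rfl fun v _ => ?_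
  rw [Wc_symm]

open Classical in
lemma T3_eq (K : ℕ) :
    ∑ v : Fin n → ZMod p, ∑ t : Fin n → ZMod p, Wc d t v * (if p = 2 ∧ NC K (t + v) then 1 else 0) =
      (if p = 2 then 1 else 0) * ((p : ℂ) ^ n *
        (∑ v ∈ univ.filter (fun v : Fin n → ZMod p => NC K v), NN d v : ℕ)) := by
  by_cases hp : p = 2
  · rw [if_pos hp, one_mul, ← T2_eq]
    refine Finset.sum_congr rfl fun v _ => ?_
    rw [← Equiv.sum_comp (Equiv.addLeft v)]
    refine Finset.sum_congr rfl fun s _ => ?_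
    rw [Equiv.coe_addLeft, Wc_two hp]
    have : v + s + v = s := by
      subst hp
      funext i
      have := CharTwo.add_self_eq_zero (v i)
      simp only [Pi.add_apply]
      linear_combination this
    rw [this]
    simp [hp]
  · simp [hp]

open Classical in
lemma assemble (hn : 0 < n) (hd : 3 ≤ d) (hm : n * d = 2 * m) (hpd : Nat.gcd p d = 1) (K : ℕ)
    (hK : K * d < n) (hK16 : 16 * K < n) :
    |((∑ v ∈ univ.filter (fun v : Fin n → ZMod p => v ≠ 0), NN d v : ℕ) : ℝ) /
        (Mt (Fin n × Fin d)).card - (1 + if p = 2 then 1 else 0)| ≤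
      3 * ((SP p n d K : ℝ) / (Mt (Fin n × Fin d)).card) +
      ((n + 1 : ℕ) : ℝ) ^ (p ^ 2) * (Real.exp 1 * (n * d : ℕ)) ^ (p ^ 2) *
        (2 * Real.exp (-(K / (192 * (p : ℝ) ^ 2)))) +
      2 * (((univ.filter (fun q : (Fin n → ZMod p) × (Fin n → ZMod p) => PTp q.1 q.2)).card : ℝ) /
        (p : ℝ) ^ n) := by
  have hH : Fintype.card (Fin n × Fin d) = 2 * m := by simp [hm]
  have hMpos : (0 : ℝ) < (Mt (Fin n × Fin d)).card := by exact_mod_cast Mt_card_pos hH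
  have hpR : (0 : ℝ) < p := by exact_mod_cast (Fact.out : p.Prime).pos
  set M : ℝ := ((Mt (Fin n × Fin d)).card : ℝ) with hM
  set E : ℝ := 2 * Real.exp (-(K / (192 * (p : ℝ) ^ 2))) with hE
  set L : ℝ := (Real.exp 1 * (n * d : ℕ)) ^ (p ^ 2) with hL
  have hE0 : 0 ≤ E := by positivity
  have hL0 : 0 ≤ L := by positivity
  -- pointwise bound
  have hpt : ∀ v t : Fin n → ZMod p,
      ‖Wc d t v * (1 - (if NC K v then 1 else 0) - (if NC K t then 1 else 0) -
        (if p = 2 ∧ NC K (t + v) then 1 else 0))‖ ≤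
      M * ((p : ℝ) ^ n * (L * PP (fun i => (t i, v i)) * E)) + 2 * M * (if PTp t v then 1 else 0) := by
    intro v t
    have hPP : 0 < PP (fun i => (t i, v i)) := PP_pos hn _
    have hX : 0 ≤ M * ((p : ℝ) ^ n * (L * PP (fun i => (t i, v i)) * E)) := by positivity
    have hW := Wc_le (d := d) t v
    rw [norm_mul]
    by_cases hP : PTp t v
    · rw [if_pos hP]
      have : ‖(1 - (if NC K v then 1 else 0) - (if NC K t then 1 else 0) -
        (if p = 2 ∧ NC K (t + v) then 1 else 0) : ℂ)‖ ≤ 2 := by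
        split_ifs <;> norm_num
      have h2 := mul_le_mul hW this (norm_nonneg _) hMpos.le
      linarith
    · rw [if_neg hP, mul_zero, add_zero]
      by_cases h1 : NC K v
      · have h2 : ¬ NC K t := fun h => hP (PT12 K hK16 t v h1 h)
        have h3 : ¬ (p = 2 ∧ NC K (t + v)) := fun h => hP (PT13 K hK16 t v h1 h.2)
        simp [h1, h2, h3, hX]
      · by_cases h2 : NC K t
        · have h3 : ¬ (p = 2 ∧ NC K (t + v)) := fun h => hP (PT23 K hK16 t v h2 h.2)
          simp [h1, h2, h3, hX]
        · by_cases h3 : p = 2 ∧ NC K (t + v)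
          · rw [if_neg h1, if_neg h2, if_pos h3]
            simpa using hX
          · have h4 := R_point hn hd hm (fun i => (t i, v i)) K (by positivity)
              (by exact_mod_cast hK16.le) (by
                intro a
                by_contra hcon
                push Not at hcon
                exact hP ⟨a, by exact_mod_cast hcon⟩) (by
                intro c
                by_contra hcon
                push Not at hcon
                exact h2 ⟨c, by exact_mod_cast hcon.le⟩) (by
                intro c
                by_contra hcon
                push Not at hcon
                exact h1 ⟨c, by exact_mod_cast hcon.le⟩) (by
                intro hp c
                by_contra hcon
                push Not at hcon
                exact h3 ⟨hp, c, by exact_mod_cast hcon.le⟩)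
            rw [inv_mul_le_iff₀ (by positivity)] at h4
            rw [if_neg h1, if_neg h2, if_neg h3, Wc_norm hm]
            simp only [sub_zero, norm_one, mul_one]
            exact mul_le_mul_of_nonneg_left h4 hMpos.le
  have hsum : ‖∑ v : Fin n → ZMod p, ∑ t : Fin n → ZMod p,
      Wc d t v * (1 - (if NC K v then 1 else 0) - (if NC K t then 1 else 0) -
        (if p = 2 ∧ NC K (t + v) then 1 else 0))‖ ≤
      M * ((p : ℝ) ^ n * (L * ((n + 1 : ℕ) : ℝ) ^ (p ^ 2) * E)) + 2 * M *
        (univ.filter (fun q : (Fin n → ZMod p) × (Fin n → ZMod p) => PTp q.1 q.2)).card := by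
    refine (norm_sum_le _ _).trans ?_
    refine (Finset.sum_le_sum fun v _ => (norm_sum_le _ _).trans
      (Finset.sum_le_sum fun t _ => hpt v t)).trans ?_
    rw [Finset.sum_comm, ← Fintype.sum_prod_type' (f := fun t v : Fin n → ZMod p =>
      M * ((p : ℝ) ^ n * (L * PP (fun i => (t i, v i)) * E)) + 2 * M * (if PTp t v then 1 else 0)),
      Finset.sum_add_distrib]
    refine add_le_add ?_ ?_
    · have h5 := sum_PP (G := ZMod p × ZMod p) hn
      rw [show Fintype.card (ZMod p × ZMod p) = p ^ 2 by simp [ZMod.card, pow_two]] at h5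
      have h6 : ∑ q : (Fin n → ZMod p) × (Fin n → ZMod p), PP (fun i => (q.1 i, q.2 i)) =
          ∑ x : Fin n → ZMod p × ZMod p, PP x :=
        Fintype.sum_equiv (Equiv.arrowProdEquivProdArrow (Fin n) (fun _ => ZMod p) (fun _ => ZMod p)).symm _ _
          (fun q => rfl)
      rw [← h6] at h5
      have h7 : ∀ q : (Fin n → ZMod p) × (Fin n → ZMod p),
          M * ((p : ℝ) ^ n * (L * PP (fun i => (q.1 i, q.2 i)) * E)) =
          M * (p : ℝ) ^ n * L * E * PP (fun i => (q.1 i, q.2 i)) := fun q => by ring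
      simp_rw [h7]
      rw [← Finset.mul_sum]
      calc _ ≤ M * (p : ℝ) ^ n * L * E * ((n + 1 : ℕ) : ℝ) ^ (p ^ 2) :=
            mul_le_mul_of_nonneg_left h5 (by positivity)
        _ = _ := by ring
    · rw [← Finset.mul_sum, Finset.card_filter]
      push_cast
      exact le_refl _
  -- evaluate
  have hNC := sum_NC (p := p) (d := d) hpd K hK
  set D : ℕ := ∑ v ∈ univ.filter (fun v : Fin n → ZMod p => v ≠ 0), NN d v with hD
  have hT0 : ∑ v : Fin n → ZMod p, ∑ t : Fin n → ZMod p, Wc d t v =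
      (p : ℂ) ^ n * ((Mt (Fin n × Fin d)).card + D : ℕ) := by
    simp_rw [sum_Wc]
    rw [← Finset.mul_sum, ← Nat.cast_sum]
    congr 2
    rw [hD, ← NN_zero (p := p), Finset.filter_ne', Finset.add_sum_erase _ _ (mem_univ _)]
  have hev : ∑ v : Fin n → ZMod p, ∑ t : Fin n → ZMod p,
      Wc d t v * (1 - (if NC K v then 1 else 0) - (if NC K t then 1 else 0) -
        (if p = 2 ∧ NC K (t + v) then 1 else 0)) =
      (((p : ℝ) ^ n * ((M + D) - (2 + if p = 2 then 1 else 0) * (M + SP p n d K)) : ℝ) : ℂ) := by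
    simp_rw [mul_sub, mul_one, Finset.sum_sub_distrib]
    rw [T1_eq, T2_eq, T3_eq, hT0, hNC, hM]
    split_ifs <;> push_cast <;> ring
  rw [hev, Complex.norm_real, Real.norm_eq_abs, abs_mul, abs_of_pos (by positivity)] at hsum
  have hb0 : 0 ≤ (if p = 2 then (1 : ℝ) else 0) ∧ (if p = 2 then (1 : ℝ) else 0) ≤ 1 := by
    split_ifs <;> norm_num
  exact arith_aux M D _ (SP p n d K) (((n + 1 : ℕ) : ℝ) ^ (p ^ 2)) L E _ ((p : ℝ) ^ n) hMpos
    (by positivity) hb0.1 hb0.2 (by positivity) hsum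

end
end UCNV

namespace UCNV
set_option linter.unusedSectionVars false

lemma wt_sum {G : Type*} [Fintype G] [DecidableEq G] (n : ℕ) (a : G) (z : ℝ) (hz : 0 ≤ z) :
    ∑ x : Fin n → G, z ^ (univ.filter (fun i => x i ≠ a)).card ≤ (1 + Fintype.card G * z) ^ n := by
  have h1 : ∀ x : Fin n → G, z ^ (univ.filter (fun i => x i ≠ a)).card =
      ∏ i, (if x i ≠ a then z else 1) := by
    intro x
    rw [Finset.prod_ite, Finset.prod_const, Finset.prod_const_one, mul_one]
  simp_rw [h1]
  rw [← Fintype.sum_pow (fun b : G => if b ≠ a then z else 1) n]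
  refine pow_le_pow_left₀ (Finset.sum_nonneg fun b _ => by split_ifs <;> positivity) ?_ n
  calc ∑ b : G, (if b ≠ a then z else 1) ≤ ∑ b : G, ((if b = a then 1 else 0) + z) := by
        refine Finset.sum_le_sum fun b _ => ?_
        by_cases h : b = a <;> simp [h, hz]
    _ = 1 + Fintype.card G * z := by rw [Finset.sum_add_distrib]; simp

section
variable {p n d m : ℕ} [Fact p.Prime]

open Classical in
lemma PT_count :
    ((univ.filter (fun q : (Fin n → ZMod p) × (Fin n → ZMod p) => PTp q.1 q.2)).card : ℝ) / (p : ℝ) ^ n ≤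
      (p : ℝ) ^ 2 * (25 / 28 : ℝ) ^ n := by
  have hp2 : (2 : ℝ) ≤ p := by exact_mod_cast (Fact.out : p.Prime).two_le
  have hpR : (0 : ℝ) < p := by linarith
  have h0 : (univ.filter (fun q : (Fin n → ZMod p) × (Fin n → ZMod p) => PTp q.1 q.2)).card ≤
      (univ.filter (fun x : Fin n → ZMod p × ZMod p =>
        ∃ a, 8 * (univ.filter (fun i => x i ≠ a)).card < n)).card := by
    refine Finset.card_le_card_of_injOn (fun q i => (q.1 i, q.2 i)) ?_ ?_
    · intro q hq
      simp only [coe_filter, mem_univ, true_and, Set.mem_ofPred_eq] at hq ⊢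
      exact hq
    · intro q _ q' _ h
      refine Prod.ext ?_ ?_ <;> funext i
      · exact congrArg Prod.fst (congrFun h i)
      · exact congrArg Prod.snd (congrFun h i)
  set w : ℝ := √√(1 / (2 * p)) with hw
  have hw0 : 0 < w := by positivity
  have hw4 : w ^ 4 = 1 / (2 * p) := by
    rw [show (4 : ℕ) = 2 * 2 by norm_num, pow_mul, hw, Real.sq_sqrt (by positivity), Real.sq_sqrt (by positivity)]
  have hw8 : w ^ 8 = 1 / (4 * (p : ℝ) ^ 2) := by
    rw [show (8 : ℕ) = 4 * 2 by norm_num, pow_mul, hw4]; field_simp; norm_num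
  have hw1 : w ≤ 1 := by
    refine le_of_pow_le_pow_left₀ (n := 4) (by norm_num) zero_le_one ?_
    rw [hw4, one_pow, div_le_one (by positivity)]; linarith
  have hwp : 7 / 5 ≤ w * p := by
    refine le_of_pow_le_pow_left₀ (n := 4) (by norm_num) (by positivity) ?_
    rw [mul_pow, hw4]
    have : 1 / (2 * (p : ℝ)) * (p : ℝ) ^ 4 = (p : ℝ) ^ 3 / 2 := by field_simp
    rw [this]
    have : (2 : ℝ) ^ 3 ≤ (p : ℝ) ^ 3 := by gcongr
    norm_num at this ⊢
    linarith
  have h1 : ∀ a : ZMod p × ZMod p, ((univ.filter (fun x : Fin n → ZMod p × ZMod p =>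
        8 * (univ.filter (fun i => x i ≠ a)).card < n)).card : ℝ) * w ^ n ≤ (5 / 4 : ℝ) ^ n := by
    intro a
    have h2 := wt_sum n a (w ^ 8) (by positivity)
    rw [show ((Fintype.card (ZMod p × ZMod p) : ℕ) : ℝ) = (p : ℝ) ^ 2 by simp [ZMod.card, pow_two], hw8,
      show 1 + (p : ℝ) ^ 2 * (1 / (4 * (p : ℝ) ^ 2)) = 5 / 4 by field_simp; norm_num] at h2
    refine le_trans ?_ h2
    rw [← nsmul_eq_mul, ← Finset.sum_const]
    refine (Finset.sum_le_sum fun x hx => ?_).trans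
      (Finset.sum_le_univ_sum_of_nonneg fun x => by positivity)
    simp only [mem_filter, mem_univ, true_and] at hx
    rw [← hw8, ← pow_mul]
    exact pow_le_pow_of_le_one hw0.le hw1 hx.le
  have h3 : ((univ.filter (fun x : Fin n → ZMod p × ZMod p =>
        ∃ a, 8 * (univ.filter (fun i => x i ≠ a)).card < n)).card : ℝ) ≤
      ∑ a : ZMod p × ZMod p, ((univ.filter (fun x : Fin n → ZMod p × ZMod p =>
        8 * (univ.filter (fun i => x i ≠ a)).card < n)).card : ℝ) := by
    have : univ.filter (fun x : Fin n → ZMod p × ZMod p =>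
        ∃ a, 8 * (univ.filter (fun i => x i ≠ a)).card < n) ⊆
        (univ : Finset (ZMod p × ZMod p)).biUnion fun a => univ.filter (fun x : Fin n → ZMod p × ZMod p =>
        8 * (univ.filter (fun i => x i ≠ a)).card < n) := by
      intro x hx
      simp only [mem_filter, mem_univ, true_and, mem_biUnion] at hx ⊢
      exact hx
    have h4 := (Finset.card_le_card this).trans Finset.card_biUnion_le
    exact_mod_cast h4
  have h5 : ∀ a : ZMod p × ZMod p, ((univ.filter (fun x : Fin n → ZMod p × ZMod p =>
        8 * (univ.filter (fun i => x i ≠ a)).card < n)).card : ℝ) ≤ (25 / 28 : ℝ) ^ n * (p : ℝ) ^ n := by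
    intro a
    refine le_of_mul_le_mul_right ((h1 a).trans ?_) (pow_pos hw0 n)
    rw [← mul_pow, ← mul_pow]
    refine pow_le_pow_left₀ (by norm_num) ?_ n
    nlinarith
  rw [div_le_iff₀ (by positivity)]
  calc _ ≤ ((univ.filter (fun x : Fin n → ZMod p × ZMod p =>
        ∃ a, 8 * (univ.filter (fun i => x i ≠ a)).card < n)).card : ℝ) := by exact_mod_cast h0
    _ ≤ _ := h3
    _ ≤ ∑ a : ZMod p × ZMod p, (25 / 28 : ℝ) ^ n * (p : ℝ) ^ n := Finset.sum_le_sum fun a _ => h5 a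
    _ = _ := by
      rw [Finset.sum_const, nsmul_eq_mul, Finset.card_univ,
        show ((Fintype.card (ZMod p × ZMod p) : ℕ) : ℝ) = (p : ℝ) ^ 2 by simp [ZMod.card, pow_two]]
      ring

lemma sparse_k (hn : 0 < n) (hd : 3 ≤ d) (hm : n * d = 2 * m) (k : ℕ) (hk : 1 ≤ k) (hkn : 2 * k ≤ n) :
    ((∑ v ∈ univ.filter (fun v : Fin n → ZMod p => (univ.filter (fun i => v i ≠ 0)).card = k), NN d v : ℕ)
      : ℝ) ≤ (Mt (Fin n × Fin d)).card *
        (2 * Real.exp (1 + 2 ^ (d + 1)) * p * √(2 * k / n)) ^ k := by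
  have hpR : (0 : ℝ) < p := by exact_mod_cast (Fact.out : p.Prime).pos
  have hnR : (0 : ℝ) < n := by exact_mod_cast hn
  have hkR : (0 : ℝ) < k := by exact_mod_cast hk
  have hdR : (0 : ℝ) < d := by positivity
  have hm0 : 0 < m := by
    have : 0 < n * d := Nat.mul_pos hn (by omega)
    omega
  have hmR : (0 : ℝ) < m := by exact_mod_cast hm0
  set y : ℝ := √(2 * k / n) with hy
  have hy' : y = √(((d * k : ℕ) : ℝ) / m) := by
    rw [hy]; congr 1
    have : (n : ℝ) * d = 2 * m := by exact_mod_cast hm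
    push_cast
    rw [div_eq_div_iff hnR.ne' hmR.ne']
    linear_combination (-(k : ℝ)) * this
  have hy0 : 0 ≤ y := Real.sqrt_nonneg _
  have hysq : y ^ 2 = 2 * k / n := Real.sq_sqrt (by positivity)
  have hy1 : y ≤ 1 := by
    refine Real.sqrt_le_iff.2 ⟨zero_le_one, ?_⟩
    rw [one_pow, div_le_one hnR]; exact_mod_cast hkn
  set cN : ℝ := ((univ.filter (fun v : Fin n → ZMod p => (univ.filter (fun i => v i ≠ 0)).card = k)).card : ℝ)
    with hcN
  have hcount : cN * ((k : ℝ) / (p * n)) ^ k ≤ Real.exp k := by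
    have h2 := wt_sum n (0 : ZMod p) ((k : ℝ) / (p * n)) (by positivity)
    have h3 : (1 + (Fintype.card (ZMod p) : ℝ) * ((k : ℝ) / (p * n))) ^ n ≤ Real.exp k := by
      rw [ZMod.card]
      have h4 : (p : ℝ) * ((k : ℝ) / (p * n)) = k / n := by field_simp
      rw [h4]
      have h5 := Real.add_one_le_exp ((k : ℝ) / n)
      calc (1 + (k : ℝ) / n) ^ n ≤ Real.exp ((k : ℝ) / n) ^ n := by
            refine pow_le_pow_left₀ (by positivity) (by linarith) n
        _ = Real.exp k := by rw [← Real.exp_nat_mul]; congr 1; field_simp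
    refine le_trans ?_ (h2.trans h3)
    rw [hcN, ← nsmul_eq_mul, ← Finset.sum_const]
    refine (Finset.sum_le_sum fun x hx => ?_).trans
      (Finset.sum_le_univ_sum_of_nonneg fun x => by positivity)
    simp only [mem_filter, mem_univ, true_and] at hx
    rw [hx]
  have hcount2 : cN ≤ (Real.exp 1 * (p * n / k)) ^ k := by
    have h6 : (0 : ℝ) < ((k : ℝ) / (p * n)) ^ k := by positivity
    refine le_of_mul_le_mul_right (hcount.trans (le_of_eq ?_)) h6
    rw [← mul_pow, mul_assoc, show (p * n / k : ℝ) * (k / (p * n)) = 1 by field_simp, mul_one,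
      ← Real.exp_nat_mul, mul_one]
  set M : ℝ := ((Mt (Fin n × Fin d)).card : ℝ) with hM
  have hterm : ∀ v ∈ univ.filter (fun v : Fin n → ZMod p => (univ.filter (fun i => v i ≠ 0)).card = k),
      (NN d v : ℝ) ≤ M * (y ^ (3 * k) * Real.exp (2 ^ (d + 1)) ^ k) := by
    intro v hv
    simp only [mem_filter, mem_univ, true_and] at hv
    refine (sparse_bound n d p m k hm hm0 v hv y hy' hy1).trans ?_
    refine mul_le_mul_of_nonneg_left ?_ (by positivity)
    refine mul_le_mul ?_ ?_ (by positivity) (by positivity)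
    · exact pow_le_pow_of_le_one hy0 hy1 (Nat.mul_le_mul_right k hd)
    · have h5 := Real.add_one_le_exp ((2 : ℝ) ^ d * y ^ 2)
      calc (1 + (2 : ℝ) ^ d * y ^ 2) ^ n ≤ Real.exp ((2 : ℝ) ^ d * y ^ 2) ^ n := by
            refine pow_le_pow_left₀ (by positivity) (by linarith) n
        _ = _ := by
          rw [← Real.exp_nat_mul, ← Real.exp_nat_mul, hysq]
          congr 1
          field_simp
          ring
  push_cast
  refine (Finset.sum_le_sum hterm).trans ?_
  rw [Finset.sum_const, nsmul_eq_mul]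
  change cN * _ ≤ _
  calc cN * (M * (y ^ (3 * k) * Real.exp (2 ^ (d + 1)) ^ k))
      ≤ (Real.exp 1 * (p * n / k)) ^ k * (M * (y ^ (3 * k) * Real.exp (2 ^ (d + 1)) ^ k)) := by
        gcongr
    _ = M * (Real.exp 1 * (p * n / k) * y ^ 3 * Real.exp (2 ^ (d + 1))) ^ k := by
      rw [pow_mul, mul_pow _ (Real.exp _) k, mul_pow _ (y ^ 3) k]; ring
    _ = _ := by
      congr 2
      rw [pow_succ, hysq, Real.exp_add]
      field_simp

lemma SP_bound (hn : 0 < n) (hd : 3 ≤ d) (hm : n * d = 2 * m) (K : ℕ) (hK : 2 * K ≤ n)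
    (q : ℝ) (hq : q = 2 * Real.exp (1 + 2 ^ (d + 1)) * p * √(2 * K / n)) (hq2 : q ≤ 1 / 2) :
    (SP p n d K : ℝ) / (Mt (Fin n × Fin d)).card ≤ 2 * q := by
  have hH : Fintype.card (Fin n × Fin d) = 2 * m := by simp [hm]
  have hMpos : (0 : ℝ) < (Mt (Fin n × Fin d)).card := by exact_mod_cast Mt_card_pos hH
  have hnR : (0 : ℝ) < n := by exact_mod_cast hn
  have hq0 : 0 ≤ q := by rw [hq]; positivity
  have h1 : SP p n d K ≤ ∑ k ∈ Finset.Icc 1 K, ∑ v ∈ univ.filter (fun v : Fin n → ZMod p =>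
      (univ.filter (fun i => v i ≠ 0)).card = k), NN d v := by
    unfold SP
    rw [← Finset.sum_biUnion]
    · refine Finset.sum_le_sum_of_subset ?_
      intro v hv
      simp only [mem_filter, mem_univ, true_and, mem_biUnion, Finset.mem_Icc] at hv ⊢
      refine ⟨_, ⟨?_, hv.2⟩, rfl⟩
      rw [Nat.succ_le_iff, Finset.card_pos]
      by_contra hcon
      rw [Finset.not_nonempty_iff_eq_empty, Finset.filter_eq_empty_iff] at hcon
      apply hv.1
      funext i
      simpa using hcon (mem_univ i)
    · intro a _ b _ hab
      rw [Function.onFun, Finset.disjoint_left]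
      intro v hv hv'
      simp only [mem_filter, mem_univ, true_and] at hv hv'
      exact hab (hv.symm.trans hv')
  have h2 : (SP p n d K : ℝ) ≤ ∑ k ∈ Finset.Icc 1 K, ((Mt (Fin n × Fin d)).card : ℝ) * q ^ k := by
    refine (Nat.cast_le.2 h1).trans ?_
    rw [Nat.cast_sum]
    refine Finset.sum_le_sum fun k hk => ?_
    rw [Finset.mem_Icc] at hk
    refine (sparse_k hn hd hm k hk.1 (by omega)).trans ?_
    refine mul_le_mul_of_nonneg_left (pow_le_pow_left₀ (by positivity) ?_ k) hMpos.le
    rw [hq]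
    have : (k : ℝ) ≤ K := by exact_mod_cast hk.2
    gcongr
  rw [← Finset.mul_sum] at h2
  rw [div_le_iff₀ hMpos]
  have h3 : ∀ K : ℕ, ∑ k ∈ Finset.Icc 1 K, q ^ k ≤ 2 * q - q ^ (K + 1) * 2 := by
    intro K
    induction K with
    | zero => simp; linarith
    | succ K ih =>
      rw [Finset.sum_Icc_succ_top (by omega)]
      have : q ^ (K + 1 + 1) * 2 ≤ q ^ (K + 1) := by
        rw [pow_succ]
        have := pow_nonneg hq0 (K + 1)
        nlinarith
      linarith
  have h4 : ∑ k ∈ Finset.Icc 1 K, q ^ k ≤ 2 * q := by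
    have := pow_nonneg hq0 (K + 1)
    linarith [h3 K]
  nlinarith

end
end UCNV

namespace UCNV
set_option linter.unusedSectionVars false

lemma adj_mulVec (p n d : ℕ) [Fact p.Prime] (σ : Equiv.Perm (Fin n × Fin d)) (v : Fin n → ZMod p) :
    Matrix.mulVec ((adjMat n d σ).map (Int.cast : ℤ → ZMod p)) v = Av σ v := by
  funext l
  have h := sum_comp_cnt (R := ZMod p) (fun i : Fin d => (σ (l, i)).1) v
  rw [Av, h]
  simp only [Matrix.mulVec, dotProduct, Matrix.map_apply, adjMat, cnt]
  push_cast
  rfl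

lemma link (p n d m : ℕ) [Fact p.Prime] (hm : n * d = 2 * m) :
    ((2 : ℝ) ^ (n * d / 2) * ((n * d / 2).factorial : ℝ) / ((n * d).factorial : ℝ)) *
          (∑ v ∈ Finset.univ.filter (fun v : Fin n → ZMod p => v ≠ 0),
            ((Finset.univ.filter (fun σ : Equiv.Perm (Fin n × Fin d) =>
              (∀ x, σ (σ x) = x) ∧ (∀ x, σ x ≠ x) ∧
              Matrix.mulVec ((adjMat n d σ).map (Int.cast : ℤ → ZMod p)) v = 0)).card : ℝ)) =
      ((∑ v ∈ univ.filter (fun v : Fin n → ZMod p => v ≠ 0), NN d v : ℕ) : ℝ) /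
        (Mt (Fin n × Fin d)).card := by
  have hH : Fintype.card (Fin n × Fin d) = 2 * m := by simp [hm]
  have h3 := card_Mt hH
  have hMpos : (0 : ℝ) < (Mt (Fin n × Fin d)).card := by exact_mod_cast Mt_card_pos hH
  have h4 : ∀ v : Fin n → ZMod p, (Finset.univ.filter (fun σ : Equiv.Perm (Fin n × Fin d) =>
              (∀ x, σ (σ x) = x) ∧ (∀ x, σ x ≠ x) ∧
              Matrix.mulVec ((adjMat n d σ).map (Int.cast : ℤ → ZMod p)) v = 0)).card = NN d v := by
    intro v
    unfold NN
    congr 1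
    ext σ
    simp only [mem_filter, mem_univ, true_and, mem_Mt, adj_mulVec, and_assoc]
    refine and_congr Iff.rfl (and_congr Iff.rfl ?_)
    exact funext_iff
  simp_rw [h4]
  rw [hm, ← h3, Nat.mul_div_cancel_left m (by norm_num)]
  push_cast
  have h5 : ((m.factorial : ℕ) : ℝ) ≠ 0 := by positivity
  field_simp

lemma bound_all (d : ℕ) (hd : 3 ≤ d) (n m p : ℕ) [Fact p.Prime] (hn : 0 < n) (hm : n * d = 2 * m)
    (hpd : Nat.gcd p d = 1) (hp : (p : ℝ) ≤ (n : ℝ) ^ (1 / 8 : ℝ)) (ε : ℝ)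
    (h1 : ((d : ℝ) + 16) * (n : ℝ) ^ (7 / 10 : ℝ) < n)
    (h2 : 2 * Real.exp (1 + 2 ^ (d + 1)) * (√2 * (n : ℝ) ^ (-(1 / 40) : ℝ)) ≤ 1 / 2)
    (h3 : 2 * Real.exp (1 + 2 ^ (d + 1)) * (√2 * (n : ℝ) ^ (-(1 / 40) : ℝ)) ≤ ε / 18)
    (h4 : Real.log (((n + 1 : ℕ) : ℝ) * (Real.exp 1 * (n * d : ℕ))) ≤ (n : ℝ) ^ (1 / 10 : ℝ))
    (h5 : (2 : ℝ) ≤ (n : ℝ) ^ (7 / 10 : ℝ))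
    (h6 : 768 ≤ (n : ℝ) ^ (1 / 10 : ℝ))
    (h7 : 2 * Real.exp (-((n : ℝ) ^ (9 / 20 : ℝ) / 768)) ≤ ε / 3)
    (h8 : 2 * (n * (25 / 28 : ℝ) ^ n) ≤ ε / 3) :
    |((∑ v ∈ univ.filter (fun v : Fin n → ZMod p => v ≠ 0), NN d v : ℕ) : ℝ) /
        (Mt (Fin n × Fin d)).card - (1 + if p = 2 then 1 else 0)| ≤ ε := by
  classical
  have hnR : (0 : ℝ) < n := by exact_mod_cast hn
  have hn1 : (1 : ℝ) ≤ n := by exact_mod_cast hn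
  have hpR : (0 : ℝ) < p := by exact_mod_cast (Fact.out : p.Prime).pos
  set K : ℕ := ⌊(n : ℝ) ^ (7 / 10 : ℝ)⌋₊ with hKdef
  have hKle : (K : ℝ) ≤ (n : ℝ) ^ (7 / 10 : ℝ) := Nat.floor_le (by positivity)
  have hKge : (n : ℝ) ^ (7 / 10 : ℝ) / 2 ≤ K := by
    have := Nat.lt_floor_add_one ((n : ℝ) ^ (7 / 10 : ℝ))
    rw [← hKdef] at this
    linarith
  have hKd : K * d < n := by
    have : (K : ℝ) * d < n := by
      have h9 : (0 : ℝ) ≤ d := by positivity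
      have h10 : (0 : ℝ) ≤ (n : ℝ) ^ (7 / 10 : ℝ) := by positivity
      nlinarith
    exact_mod_cast this
  have hK16 : 16 * K < n := by
    have : 16 * (K : ℝ) < n := by
      have h9 : (0 : ℝ) ≤ d := by positivity
      have h10 : (0 : ℝ) ≤ (n : ℝ) ^ (7 / 10 : ℝ) := by positivity
      nlinarith
    exact_mod_cast this
  have hp2 : (p : ℝ) ^ 2 ≤ (n : ℝ) ^ (1 / 4 : ℝ) := by
    calc (p : ℝ) ^ 2 ≤ ((n : ℝ) ^ (1 / 8 : ℝ)) ^ 2 := by gcongr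
      _ = _ := by rw [← Real.rpow_natCast, ← Real.rpow_mul hnR.le]; norm_num
  have hmain := assemble (p := p) hn hd hm hpd K hKd hK16
  -- sparse
  set q : ℝ := 2 * Real.exp (1 + 2 ^ (d + 1)) * p * √(2 * K / n) with hq
  have hqle : q ≤ 2 * Real.exp (1 + 2 ^ (d + 1)) * (√2 * (n : ℝ) ^ (-(1 / 40) : ℝ)) := by
    rw [hq, mul_assoc]
    refine mul_le_mul_of_nonneg_left ?_ (by positivity)
    have h9 : √(2 * K / n) ≤ √2 * (n : ℝ) ^ (-(3 / 20) : ℝ) := by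
      rw [mul_div_assoc, Real.sqrt_mul (by norm_num)]
      refine mul_le_mul_of_nonneg_left ?_ (by positivity)
      rw [Real.sqrt_le_left (by positivity), ← Real.rpow_natCast, ← Real.rpow_mul hnR.le, div_le_iff₀ hnR]
      refine hKle.trans (le_of_eq ?_)
      nth_rewrite 3 [← Real.rpow_one (n : ℝ)]
      rw [← Real.rpow_add hnR]; norm_num
    calc (p : ℝ) * √(2 * K / n) ≤ (n : ℝ) ^ (1 / 8 : ℝ) * (√2 * (n : ℝ) ^ (-(3 / 20) : ℝ)) := by gcongr
      _ = √2 * ((n : ℝ) ^ (1 / 8 : ℝ) * (n : ℝ) ^ (-(3 / 20) : ℝ)) := by ring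
      _ = _ := by rw [← Real.rpow_add hnR]; norm_num
  have hSP := SP_bound (p := p) hn hd hm K (by omega) q hq (hqle.trans h2)
  have hPT := PT_count (p := p) (n := n)
  have hPT2 : (p : ℝ) ^ 2 * (25 / 28 : ℝ) ^ n ≤ n * (25 / 28 : ℝ) ^ n := by
    refine mul_le_mul_of_nonneg_right (hp2.trans ?_) (by positivity)
    calc (n : ℝ) ^ (1 / 4 : ℝ) ≤ (n : ℝ) ^ (1 : ℝ) := Real.rpow_le_rpow_of_exponent_le hn1 (by norm_num)
      _ = n := Real.rpow_one _
  -- middle term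
  have hmid : ((n + 1 : ℕ) : ℝ) ^ (p ^ 2) * (Real.exp 1 * (n * d : ℕ)) ^ (p ^ 2) *
        (2 * Real.exp (-(K / (192 * (p : ℝ) ^ 2)))) ≤ ε / 3 := by
    refine le_trans ?_ h7
    have hnd : (0 : ℝ) < (n * d : ℕ) := by
      have : 0 < n * d := Nat.mul_pos hn (by omega)
      exact_mod_cast this
    have hbase : (0 : ℝ) < ((n + 1 : ℕ) : ℝ) * (Real.exp 1 * (n * d : ℕ)) := by positivity
    have h9 : ((n + 1 : ℕ) : ℝ) ^ (p ^ 2) * (Real.exp 1 * (n * d : ℕ)) ^ (p ^ 2) ≤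
        Real.exp ((n : ℝ) ^ (7 / 20 : ℝ)) := by
      rw [← mul_pow]
      nth_rewrite 1 [← Real.exp_log hbase]
      rw [← Real.exp_nat_mul, Real.exp_le_exp]
      push_cast at h4 ⊢
      calc (p : ℝ) ^ 2 * Real.log (((n : ℝ) + 1) * (Real.exp 1 * (n * d)))
          ≤ (p : ℝ) ^ 2 * (n : ℝ) ^ (1 / 10 : ℝ) := by gcongr
        _ ≤ (n : ℝ) ^ (1 / 4 : ℝ) * (n : ℝ) ^ (1 / 10 : ℝ) := by gcongr
        _ = _ := by rw [← Real.rpow_add hnR]; norm_num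
    have h10 : (n : ℝ) ^ (9 / 20 : ℝ) / 384 ≤ K / (192 * (p : ℝ) ^ 2) := by
      rw [le_div_iff₀ (by positivity)]
      calc (n : ℝ) ^ (9 / 20 : ℝ) / 384 * (192 * (p : ℝ) ^ 2)
          ≤ (n : ℝ) ^ (9 / 20 : ℝ) / 384 * (192 * (n : ℝ) ^ (1 / 4 : ℝ)) := by gcongr
        _ = ((n : ℝ) ^ (9 / 20 : ℝ) * (n : ℝ) ^ (1 / 4 : ℝ)) / 2 := by ring
        _ = (n : ℝ) ^ (7 / 10 : ℝ) / 2 := by rw [← Real.rpow_add hnR]; norm_num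
        _ ≤ K := hKge
    have h11 : (n : ℝ) ^ (7 / 20 : ℝ) ≤ (n : ℝ) ^ (9 / 20 : ℝ) / 768 := by
      have : (n : ℝ) ^ (9 / 20 : ℝ) = (n : ℝ) ^ (7 / 20 : ℝ) * (n : ℝ) ^ (1 / 10 : ℝ) := by
        rw [← Real.rpow_add hnR]; norm_num
      rw [this]
      have : 0 ≤ (n : ℝ) ^ (7 / 20 : ℝ) := by positivity
      nlinarith
    calc _ ≤ Real.exp ((n : ℝ) ^ (7 / 20 : ℝ)) * (2 * Real.exp (-(K / (192 * (p : ℝ) ^ 2)))) :=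
          mul_le_mul_of_nonneg_right h9 (by positivity)
      _ = 2 * Real.exp ((n : ℝ) ^ (7 / 20 : ℝ) + -(K / (192 * (p : ℝ) ^ 2))) := by
          rw [Real.exp_add]; ring
      _ ≤ _ := by
        refine mul_le_mul_of_nonneg_left (Real.exp_le_exp.2 ?_) (by norm_num)
        linarith
  linarith

open Filter Topology in
lemma eventually_all (d : ℕ) (ε : ℝ) (hε : 0 < ε) : ∀ᶠ n : ℕ in atTop,
    (((d : ℝ) + 16) * (n : ℝ) ^ (7 / 10 : ℝ) < n) ∧
    (2 * Real.exp (1 + 2 ^ (d + 1)) * (√2 * (n : ℝ) ^ (-(1 / 40) : ℝ)) ≤ 1 / 2) ∧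
    (2 * Real.exp (1 + 2 ^ (d + 1)) * (√2 * (n : ℝ) ^ (-(1 / 40) : ℝ)) ≤ ε / 18) ∧
    (Real.log (((n + 1 : ℕ) : ℝ) * (Real.exp 1 * (n * d : ℕ))) ≤ (n : ℝ) ^ (1 / 10 : ℝ)) ∧
    ((2 : ℝ) ≤ (n : ℝ) ^ (7 / 10 : ℝ)) ∧
    (768 ≤ (n : ℝ) ^ (1 / 10 : ℝ)) ∧
    (2 * Real.exp (-((n : ℝ) ^ (9 / 20 : ℝ) / 768)) ≤ ε / 3) ∧
    (2 * (n * (25 / 28 : ℝ) ^ n) ≤ ε / 3) := by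
  have tc : Tendsto (fun n : ℕ => (n : ℝ)) atTop atTop := tendsto_natCast_atTop_atTop
  have t0 : ∀ a : ℝ, 0 < a → Tendsto (fun n : ℕ => (n : ℝ) ^ a) atTop atTop := fun a ha =>
    (tendsto_rpow_atTop ha).comp tc
  have tn : ∀ a : ℝ, 0 < a → Tendsto (fun n : ℕ => (n : ℝ) ^ (-a)) atTop (𝓝 0) := fun a ha =>
    (tendsto_rpow_neg_atTop ha).comp tc
  have tq : Tendsto (fun n : ℕ => 2 * Real.exp (1 + 2 ^ (d + 1)) * (√2 * (n : ℝ) ^ (-(1 / 40) : ℝ)))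
      atTop (𝓝 0) := by
    have := ((tn (1 / 40) (by norm_num)).const_mul (√2)).const_mul (2 * Real.exp (1 + 2 ^ (d + 1)))
    simpa using this
  have te : Tendsto (fun n : ℕ => 2 * Real.exp (-((n : ℝ) ^ (9 / 20 : ℝ) / 768))) atTop (𝓝 0) := by
    have h1 : Tendsto (fun n : ℕ => (n : ℝ) ^ (9 / 20 : ℝ) / 768) atTop atTop :=
      (t0 _ (by norm_num)).atTop_div_const (by norm_num)
    have := (Real.tendsto_exp_neg_atTop_nhds_zero.comp h1).const_mul 2
    simpa using this
  have tp : Tendsto (fun n : ℕ => 2 * ((n : ℝ) * (25 / 28 : ℝ) ^ n)) atTop (𝓝 0) := by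
    have := (tendsto_self_mul_const_pow_of_lt_one (r := (25 / 28 : ℝ)) (by norm_num) (by norm_num)).const_mul 2
    simpa using this
  have e1 : ∀ᶠ n : ℕ in atTop, ((d : ℝ) + 16) * (n : ℝ) ^ (7 / 10 : ℝ) < n := by
    filter_upwards [(t0 (3 / 10) (by norm_num)).eventually_gt_atTop ((d : ℝ) + 16),
      eventually_gt_atTop 0] with n hn hn0
    have hnR : (0 : ℝ) < n := by exact_mod_cast hn0
    calc ((d : ℝ) + 16) * (n : ℝ) ^ (7 / 10 : ℝ) < (n : ℝ) ^ (3 / 10 : ℝ) * (n : ℝ) ^ (7 / 10 : ℝ) :=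
          mul_lt_mul_of_pos_right hn (by positivity)
      _ = (n : ℝ) ^ (1 : ℝ) := by rw [← Real.rpow_add hnR]; norm_num
      _ = n := Real.rpow_one _
  have e4 : ∀ᶠ n : ℕ in atTop, Real.log (((n + 1 : ℕ) : ℝ) * (Real.exp 1 * (n * d : ℕ))) ≤
      (n : ℝ) ^ (1 / 10 : ℝ) := by
    have hl := (isLittleO_log_rpow_atTop (r := 1 / 10) (by norm_num)).bound
      (show (0 : ℝ) < 1 / 4 by norm_num)
    filter_upwards [tc.eventually hl, tc.eventually_ge_atTop (2 * Real.exp 1 * (d + 1)),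
      eventually_ge_atTop 1] with n h1 h2 h3
    have hn1 : (1 : ℝ) ≤ n := by exact_mod_cast h3
    have hnR : (0 : ℝ) < n := by linarith
    rw [Real.norm_of_nonneg (Real.log_nonneg hn1), Real.norm_of_nonneg (by positivity)] at h1
    rcases Nat.eq_zero_or_pos d with hd | hd
    · subst hd; simp; positivity
    have hdR : (0 : ℝ) < d := by exact_mod_cast hd
    have he := Real.exp_pos 1
    calc Real.log (((n + 1 : ℕ) : ℝ) * (Real.exp 1 * (n * d : ℕ))) ≤ Real.log ((n : ℝ) ^ 4) := by
          apply Real.log_le_log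
          · push_cast; positivity
          · push_cast
            calc ((n : ℝ) + 1) * (Real.exp 1 * (n * d)) ≤ (2 * n) * (Real.exp 1 * (n * (d + 1))) := by
                  gcongr <;> linarith
              _ = (2 * Real.exp 1 * (d + 1)) * n ^ 2 := by ring
              _ ≤ n * n ^ 2 := by gcongr
              _ = (n : ℝ) ^ 3 := by ring
              _ ≤ (n : ℝ) ^ 4 := pow_le_pow_right₀ hn1 (by norm_num)
      _ = 4 * Real.log n := by rw [Real.log_pow]; norm_num
      _ ≤ _ := by linarith
  filter_upwards [e1, tq.eventually_le_const (show (0 : ℝ) < 1 / 2 by norm_num),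
    tq.eventually_le_const (show (0 : ℝ) < ε / 18 by positivity), e4,
    (t0 (7 / 10) (by norm_num)).eventually_ge_atTop 2,
    (t0 (1 / 10) (by norm_num)).eventually_ge_atTop 768,
    te.eventually_le_const (show (0 : ℝ) < ε / 3 by positivity),
    tp.eventually_le_const (show (0 : ℝ) < ε / 3 by positivity)] with n a1 a2 a3 a4 a5 a6 a7 a8
  exact ⟨a1, a2, a3, a4, a5, a6, a7, a8⟩

end UCNV

/-- For `d ≥ 3` and `α = min {1/8, (d-2)/(5d-6)}`, for every `ε > 0` there are `c > 0` and `N`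
such that for all `n ≥ N` with `nd` even and all primes `p` with `gcd(p,d) = 1`
and `p ≤ c n^α`, the normalized count
`(2^{nd/2}(nd/2)!/(nd)!) Σ_{v ∈ 𝔽_p^n \ {0}} #{fixed-point-free involutions σ : A(σ) v = 0}`
is within `ε` of `1 + 1_{p=2}`. -/
theorem undirected_count_null_vectors (d : ℕ) (hd : 3 ≤ d) (ε : ℝ) (hε : 0 < ε) :
    ∃ c : ℝ, 0 < c ∧ ∃ N : ℕ, ∀ n : ℕ, N ≤ n → Even (n * d) →
      ∀ (p : ℕ) [Fact p.Prime], Nat.gcd p d = 1 →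
      (p : ℝ) ≤ c * (n : ℝ) ^ (min (1/8 : ℝ) (((d : ℝ) - 2) / (5 * (d : ℝ) - 6))) →
      |((2 : ℝ) ^ (n * d / 2) * ((n * d / 2).factorial : ℝ) / ((n * d).factorial : ℝ)) *
          (∑ v ∈ Finset.univ.filter (fun v : Fin n → ZMod p => v ≠ 0),
            ((Finset.univ.filter (fun σ : Equiv.Perm (Fin n × Fin d) =>
              (∀ x, σ (σ x) = x) ∧ (∀ x, σ x ≠ x) ∧
              Matrix.mulVec ((adjMat n d σ).map (Int.cast : ℤ → ZMod p)) v = 0)).card : ℝ))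
        - (1 + if p = 2 then 1 else 0)| ≤ ε := by
  obtain ⟨N, hN⟩ := Filter.eventually_atTop.1 (UCNV.eventually_all d ε hε)
  refine ⟨1, one_pos, max N 1, ?_⟩
  intro n hn heven p _ hpd hp
  have hn0 : 0 < n := lt_of_lt_of_le Nat.one_pos ((le_max_right _ _).trans hn)
  obtain ⟨m, hm⟩ := heven.two_dvd
  obtain ⟨a1, a2, a3, a4, a5, a6, a7, a8⟩ := hN n ((le_max_left _ _).trans hn)
  rw [UCNV.link p n d m hm]
  refine UCNV.bound_all d hd n m p hn0 hm hpd ?_ ε a1 a2 a3 a4 a5 a6 a7 a8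
  rw [one_mul] at hp
  refine hp.trans (Real.rpow_le_rpow_of_exponent_le (by exact_mod_cast hn0) (min_le_left _ _))
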